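/- For every s ∈ H₀(ℂ), all the integrals Z₀(s;I) and Z₁(s;T∖I) (for I ⊆ T) converge absolutely and the p-adic open string N-point zeta function satisfies the decomposition Z^{(N)}(s) = Σ_{I⊆T} p^{M_I(s)} Z₀(s;I) Z₁(s;T∖I), where M_I(s) = |T∖I| + Σ_{i∈T∖I}(s_{1i}+s_{(N−1)i}) + Σ_{2≤i<j≤N−2, i∈T∖I, j∈T} s_{ij} + Σ_{2≤i<j≤N−2, i∈I, j∈T∖I} s_{ij}, and Z₀(s;∅) = Z₁(s;∅) = 1 by convention. -/

import Mathlib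

open MeasureTheory Finset

noncomputable section

instance padicMS (p : ℕ) [Fact p.Prime] : MeasurableSpace ℚ_[p] := borel _
instance padicBS (p : ℕ) [Fact p.Prime] : BorelSpace ℚ_[p] := ⟨rfl⟩

/-- The closed unit ball of `ℚ_[p]` (i.e. `ℤ_[p]`) as a positive compact subset. -/
def padicBall (p : ℕ) [Fact p.Prime] : TopologicalSpace.PositiveCompacts ℚ_[p] where
  carrier := Metric.closedBall 0 1
  isCompact' := isCompact_closedBall 0 1
  interior_nonempty' := ⟨0, Metric.ball_subset_interior_closedBall (Metric.mem_ball_self one_pos)⟩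

/-- The Haar measure on `(ℚ_[p], +)`, normalized so that `ℤ_[p]` has measure `1`. -/
def padicHaar (p : ℕ) [Fact p.Prime] : Measure ℚ_[p] :=
  Measure.addHaarMeasure (padicBall p)

instance padicHaarSF (p : ℕ) [Fact p.Prime] : SigmaFinite (padicHaar p) := by
  unfold padicHaar; infer_instance

/-- The product of normalized Haar measures on a finite power of `ℚ_[p]`. -/
def padicPi (p : ℕ) [Fact p.Prime] (ι : Type) [Fintype ι] : Measure (ι → ℚ_[p]) :=
  Measure.pi fun _ => padicHaar p

/-- `T = {2, …, N-2}`. -/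
def Tset (N : ℕ) : Finset ℕ := Finset.Icc 2 (N - 2)

/-- The ordered pairs `(i, j)` with `i < j` and `i, j ∈ A`. -/
def pairsIn (A : Finset ℕ) : Finset (ℕ × ℕ) := (A ×ˢ A).filter fun q => q.1 < q.2

/-- The coordinates of a point of `ℚ_p^A`, as a function on `ℕ` (junk value `0` off `A`). -/
def padicCoord {p : ℕ} [Fact p.Prime] {A : Finset ℕ} (x : A → ℚ_[p]) (n : ℕ) : ℚ_[p] :=
  if h : n ∈ A then x ⟨n, h⟩ else 0

/-- The complement of the divisor `Λ` in `ℚ_p^{N-3}` (the domain of the Koba–Nielsen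
integrand). -/
def ZNset (p N : ℕ) [Fact p.Prime] : Set (↥(Tset N) → ℚ_[p]) :=
  {x | (∀ i, x i ≠ 0 ∧ x i ≠ 1) ∧
    ∀ q ∈ pairsIn (Tset N), padicCoord x q.1 ≠ padicCoord x q.2}

/-- The Koba–Nielsen integrand
`∏ |x_i|^{s_{1i}} |1-x_i|^{s_{(N-1)i}} ∏ |x_i-x_j|^{s_{ij}}`. -/
def ZNintegrand (p N : ℕ) [Fact p.Prime] (s : ℕ → ℕ → ℂ) (x : ↥(Tset N) → ℚ_[p]) : ℂ :=
  (∏ i ∈ Tset N,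
    (‖padicCoord x i‖ : ℂ) ^ s 1 i * (‖1 - padicCoord x i‖ : ℂ) ^ s (N - 1) i) *
  ∏ q ∈ pairsIn (Tset N), (‖padicCoord x q.1 - padicCoord x q.2‖ : ℂ) ^ s q.1 q.2

/-- The conditions `C1'`–`C4'` defining `H₀(ℂ)`. -/
def H0C (N : ℕ) (s : ℕ → ℕ → ℂ) : Prop :=
  (∀ J ⊆ Tset N, J.Nonempty →
    (J.card : ℝ) + (∑ i ∈ J, ((s 1 i).re + (s (N - 1) i).re)) +
      (∑ q ∈ (pairsIn (Tset N)).filter (fun q => q.1 ∈ J), (s q.1 q.2).re) +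
      (∑ q ∈ (pairsIn (Tset N)).filter (fun q => q.1 ∉ J ∧ q.2 ∈ J), (s q.1 q.2).re) < 0) ∧
  (∀ J ⊆ Tset N, 2 ≤ J.card →
    (0 : ℝ) < (J.card : ℝ) - 1 + ∑ q ∈ pairsIn J, (s q.1 q.2).re) ∧
  (∀ t ∈ ({1, N - 1} : Finset ℕ), ∀ J ⊆ Tset N, ∀ S ⊆ J, (2 ≤ J.card ∨ 1 ≤ S.card) →
    (0 : ℝ) < (J.card : ℝ) + (∑ i ∈ S, (s t i).re) + ∑ q ∈ pairsIn J, (s q.1 q.2).re) ∧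
  ((∀ i ∈ Tset N, -1 < (s 1 i).re ∧ -1 < (s (N - 1) i).re) ∧
    ∀ q ∈ pairsIn (Tset N), -1 < (s q.1 q.2).re)

/-- The domain of integration of `Z₀(s; I)` inside `ℤ_p^{|I|}` (off the zero locus). -/
def Z0set (p : ℕ) [Fact p.Prime] (I : Finset ℕ) : Set (↥I → ℚ_[p]) :=
  {x | (∀ i, ‖x i‖ ≤ 1 ∧ x i ≠ 0 ∧ x i ≠ 1) ∧
    ∀ q ∈ pairsIn I, padicCoord x q.1 ≠ padicCoord x q.2}

/-- The integrand of `Z₀(s; I)`. -/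
def Z0integrand (p N : ℕ) [Fact p.Prime] (s : ℕ → ℕ → ℂ) (I : Finset ℕ)
    (x : ↥I → ℚ_[p]) : ℂ :=
  (∏ i ∈ I,
    (‖padicCoord x i‖ : ℂ) ^ s 1 i * (‖1 - padicCoord x i‖ : ℂ) ^ s (N - 1) i) *
  ∏ q ∈ pairsIn I, (‖padicCoord x q.1 - padicCoord x q.2‖ : ℂ) ^ s q.1 q.2

/-- The domain of integration of `Z₁(s; J)` inside `ℤ_p^{|J|}` (off the zero locus). -/
def Z1set (p : ℕ) [Fact p.Prime] (J : Finset ℕ) : Set (↥J → ℚ_[p]) :=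
  {x | (∀ i, ‖x i‖ ≤ 1 ∧ x i ≠ 0) ∧
    ∀ q ∈ pairsIn J, padicCoord x q.1 ≠ padicCoord x q.2}

/-- The integrand of `Z₁(s; J)`. -/
def Z1integrand (p N : ℕ) [Fact p.Prime] (s : ℕ → ℕ → ℂ) (J : Finset ℕ)
    (x : ↥J → ℚ_[p]) : ℂ :=
  (∏ q ∈ pairsIn J, (‖padicCoord x q.1 - padicCoord x q.2‖ : ℂ) ^ s q.1 q.2) *
  ∏ i ∈ J, (‖padicCoord x i‖ : ℂ) ^
    (-(2 + s 1 i + s (N - 1) i + ∑ j ∈ (Tset N).erase i, s i j))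

/-- The exponent `M_I(s)`. -/
def Mexp (N : ℕ) (s : ℕ → ℕ → ℂ) (I : Finset ℕ) : ℂ :=
  ((Tset N \ I).card : ℂ) + (∑ i ∈ Tset N \ I, (s 1 i + s (N - 1) i)) +
    (∑ q ∈ (pairsIn (Tset N)).filter (fun q => q.1 ∈ Tset N \ I), s q.1 q.2) +
    ∑ q ∈ (pairsIn (Tset N)).filter (fun q => q.1 ∈ I ∧ q.2 ∈ Tset N \ I), s q.1 q.2

/-!
Split `ℚ_p^T` according to the set `I` of indices with `|x_i| ≤ 1`. By the ultrametric inequality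
`|x_i - x_j| = |x_j|` for `i ∈ I` and `j ∉ I`, and `|1 - x_j| = |x_j|`, so for fixed `I` the
integrand is a product of a function of the inner points and a function of the outer points. The
substitution `x_j ↦ (p x_j)⁻¹` maps the outer points to the unit ball and produces the factor
`p^{M_I(s)}`.

Convergence over the unit ball is proved by induction on the number of points. Points of norm `< 1`
decouple from points of norm `1`, and `x ↦ 1 - x` exchanges the fixed points `0` and `1`, so only
the exponents at `0` matter. Scaling by `p` then reduces the integral to the unit sphere at the
price of a geometric series, and on the sphere both groups of points are smaller than the original
one.
-/

open scoped NNReal ENNReal Pointwise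

section ProductMeasure

theorem lintegral_fin_nat_prod_eq_prod {n : ℕ} {E : Fin n → Type*} [∀ i, MeasurableSpace (E i)]
    {μ : ∀ i, Measure (E i)} [∀ i, SigmaFinite (μ i)] {f : ∀ i, E i → ℝ≥0∞}
    (hf : ∀ i, Measurable (f i)) :
    ∫⁻ x, ∏ i, f i (x i) ∂(Measure.pi μ) = ∏ i, ∫⁻ x, f i x ∂(μ i) := by
  induction n with
  | zero => simp
  | succ n ih =>
    have htail : Measurable fun y : ∀ i : Fin n, E i.succ => ∏ i, f i.succ (y i) :=
      Finset.measurable_fun_prod _ fun i _ => (hf _).comp (measurable_pi_apply i)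
    rw [← (measurePreserving_piFinSuccAbove μ 0).symm.lintegral_comp_emb
        (MeasurableEquiv.measurableEmbedding _), Fin.prod_univ_succ,
      ← ih fun i => hf i.succ, ← lintegral_prod_mul (hf 0).aemeasurable htail.aemeasurable]
    refine lintegral_congr fun x => ?_
    rw [Fin.prod_univ_succ]
    rfl

variable {ι : Type*} [Fintype ι] {E : ι → Type*} [∀ i, MeasurableSpace (E i)]
  {μ : ∀ i, Measure (E i)} [∀ i, SigmaFinite (μ i)]

theorem lintegral_fintype_prod_eq_prod {f : ∀ i, E i → ℝ≥0∞} (hf : ∀ i, Measurable (f i)) :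
    ∫⁻ x, ∏ i, f i (x i) ∂(Measure.pi μ) = ∏ i, ∫⁻ x, f i x ∂(μ i) := by
  let e := (Fintype.equivFin ι).symm
  rw [← (measurePreserving_piCongrLeft μ e).lintegral_comp_emb
    (MeasurableEquiv.measurableEmbedding _), ← e.prod_comp,
    ← lintegral_fin_nat_prod_eq_prod fun i => hf (e i)]
  refine lintegral_congr fun x => ?_
  rw [← e.prod_comp]
  refine Finset.prod_congr rfl fun i _ => ?_
  rw [MeasurableEquiv.coe_piCongrLeft, Equiv.piCongrLeft_apply_apply E e x i]

theorem pi_withDensity {w : ∀ i, E i → ℝ≥0} (hw : ∀ i, Measurable (w i)) :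
    (Measure.pi fun i => (μ i).withDensity fun x => (w i x : ℝ≥0∞)) =
      (Measure.pi μ).withDensity fun x => ((∏ i, w i (x i) : ℝ≥0) : ℝ≥0∞) := by
  have (i : ι) := SigmaFinite.withDensity (μ := μ i) (w i)
  refine Measure.pi_eq fun s hs => ?_
  have hind (i : ι) : Measurable ((s i).indicator fun x => (w i x : ℝ≥0∞)) :=
    (hw i).coe_nnreal_ennreal.indicator (hs i)
  rw [withDensity_apply _ (MeasurableSet.univ_pi hs),
    ← lintegral_indicator (MeasurableSet.univ_pi hs)]
  simp_rw [withDensity_apply _ (hs _), ← lintegral_indicator (hs _)]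
  rw [← lintegral_fintype_prod_eq_prod hind]
  refine lintegral_congr fun x => ?_
  by_cases hx : ∀ i, x i ∈ s i
  · rw [Set.indicator_of_mem (by simpa using hx), ENNReal.ofNNReal_finsetProd]
    exact Finset.prod_congr rfl fun i _ => by rw [Set.indicator_of_mem (hx i)]
  · rw [Set.indicator_of_notMem (by simpa using hx)]
    push Not at hx
    obtain ⟨i, hi⟩ := hx
    exact (Finset.prod_eq_zero (mem_univ i) (by rw [Set.indicator_of_notMem hi])).symm

end ProductMeasure

section Inversion

variable {G : Type*} [CommGroupWithZero G] [MeasurableSpace G] [MeasurableMul₂ G]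
  [MeasurableInv G] {m : Measure G} [SigmaFinite m]

/- Fubini on `f x⁻¹ * g (x * y)`: integrating out `y` first gives `∫ f x⁻¹ * ∫ g`, while
substituting `x * y⁻¹` for `x` first gives `∫ f * ∫ g`. -/
theorem lintegral_inv_eq_self_of_measurePreserving_mul (h0 : ∀ᵐ x ∂m, x ≠ 0)
    (hm : ∀ c : G, c ≠ 0 → MeasurePreserving (c * ·) m m) {f : G → ℝ≥0∞} (hf : Measurable f) :
    ∫⁻ x, f x⁻¹ ∂m = ∫⁻ x, f x ∂m := by
  rcases eq_zero_or_neZero m with rfl | hne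
  · simp
  obtain ⟨g₀, hg₀pos, hg₀, hg₀lt⟩ := exists_pos_lintegral_lt_of_sigmaFinite m one_ne_zero
  set g : G → ℝ≥0∞ := fun x => g₀ x
  have hg : Measurable g := hg₀.coe_nnreal_ennreal
  have hgpos : ∫⁻ x, g x ∂m ≠ 0 := by
    rw [Ne, lintegral_eq_zero_iff hg]
    intro hg0
    obtain ⟨x, hx⟩ := hg0.exists
    exact (hg₀pos x).ne' (ENNReal.coe_eq_zero.1 hx)
  refine (ENNReal.mul_left_inj hgpos (hg₀lt.trans ENNReal.one_lt_top).ne).1 ?_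
  calc (∫⁻ x, f x⁻¹ ∂m) * ∫⁻ y, g y ∂m
      = ∫⁻ x, ∫⁻ y, f x⁻¹ * g (x * y) ∂m ∂m := by
        rw [← lintegral_mul_const _ (by fun_prop)]
        refine lintegral_congr_ae ?_
        filter_upwards [h0] with x hx
        rw [lintegral_const_mul _ (by fun_prop), (hm x hx).lintegral_comp hg]
    _ = ∫⁻ y, ∫⁻ x, f x⁻¹ * g (x * y) ∂m ∂m :=
        lintegral_lintegral_swap (Measurable.aemeasurable (by fun_prop))
    _ = ∫⁻ y, ∫⁻ x, f (x⁻¹ * y) * g x ∂m ∂m := by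
        refine lintegral_congr_ae ?_
        filter_upwards [h0] with y hy
        rw [← (hm _ (inv_ne_zero hy)).lintegral_comp (by fun_prop)]
        refine lintegral_congr fun x => ?_
        rw [mul_inv, inv_inv, mul_comm y, mul_comm y⁻¹ x, inv_mul_cancel_right₀ hy]
    _ = ∫⁻ x, ∫⁻ y, f (x⁻¹ * y) * g x ∂m ∂m :=
        lintegral_lintegral_swap (Measurable.aemeasurable (by fun_prop))
    _ = (∫⁻ x, f x ∂m) * ∫⁻ y, g y ∂m := by
        rw [← lintegral_const_mul _ hg]
        refine lintegral_congr_ae ?_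
        filter_upwards [h0] with x hx
        rw [lintegral_mul_const _ (by fun_prop), (hm _ (inv_ne_zero hx)).lintegral_comp hf]

theorem measurePreserving_inv_of_measurePreserving_mul (h0 : ∀ᵐ x ∂m, x ≠ 0)
    (hm : ∀ c : G, c ≠ 0 → MeasurePreserving (c * ·) m m) :
    MeasurePreserving (fun x : G => x⁻¹) m m := by
  refine ⟨measurable_inv, Measure.ext fun t ht => ?_⟩
  rw [Measure.map_apply measurable_inv ht, ← lintegral_indicator_one ht,
    ← lintegral_indicator_one (measurable_inv ht),
    ← lintegral_inv_eq_self_of_measurePreserving_mul h0 hm (measurable_one.indicator ht)]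
  rfl

end Inversion

section Haar

variable {p : ℕ} [hp : Fact p.Prime]

instance padicHaar_isAddHaarMeasure : (padicHaar p).IsAddHaarMeasure := by
  unfold padicHaar; infer_instance

theorem padicHaar_closedBall_one : padicHaar p (Metric.closedBall 0 1) = 1 :=
  Measure.addHaarMeasure_self (K₀ := padicBall p)

theorem closedBall_one_eq_iUnion_ball :
    Metric.closedBall (0 : ℚ_[p]) 1 = ⋃ r ∈ range p, Metric.ball (r : ℚ_[p]) 1 := by
  have hr (r : ℕ) : (r : ℚ_[p]) ∈ Metric.closedBall 0 1 := by
    simpa using Padic.norm_int_le_one (p := p) r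
  refine subset_antisymm (fun x hx => ?_) (Set.iUnion₂_subset fun r _ => ?_)
  · let z : ℤ_[p] := ⟨x, by simpa using hx⟩
    refine Set.mem_biUnion (mem_coe.2 (mem_range.2 z.zmodRepr_lt_p)) ?_
    rw [Metric.mem_ball, dist_eq_norm]
    exact_mod_cast PadicInt.norm_sub_zmodRepr_lt_one z
  · exact Metric.ball_subset_closedBall.trans (IsUltrametricDist.closedBall_eq_of_mem (hr r)).ge

theorem pairwiseDisjoint_ball_natCast :
    (range p : Set ℕ).PairwiseDisjoint fun r => Metric.ball (r : ℚ_[p]) 1 := by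
  intro i hi j hj hij
  refine (IsUltrametricDist.ball_eq_or_disjoint _ _ _).resolve_left fun heq => hij ?_
  have hmem : (i : ℚ_[p]) ∈ Metric.ball (j : ℚ_[p]) 1 := heq ▸ Metric.mem_ball_self one_pos
  have hlt : ‖(((i : ℤ) - (j : ℤ) : ℤ) : ℚ_[p])‖ < 1 := by
    simpa [dist_eq_norm] using hmem
  have hi := mem_range.1 hi
  have hj := mem_range.1 hj
  have := Int.eq_zero_of_abs_lt_dvd (Padic.norm_intCast_lt_one_iff.1 hlt)
    (abs_lt.2 ⟨by omega, by omega⟩)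
  omega

theorem padicHaar_ball_one : padicHaar p (Metric.ball 0 1) = (p : ℝ≥0∞)⁻¹ := by
  have h := padicHaar_closedBall_one (p := p)
  rw [closedBall_one_eq_iUnion_ball, measure_biUnion_finset pairwiseDisjoint_ball_natCast
    fun _ _ => Metric.isOpen_ball.measurableSet] at h
  simp_rw [Measure.addHaar_ball_center] at h
  rw [sum_const, card_range, nsmul_eq_mul] at h
  exact ENNReal.eq_inv_of_mul_eq_one_left (by rwa [mul_comm])

theorem distribHaarChar_of_norm_eq_one {u : ℚ_[p]ˣ} (hu : ‖(u : ℚ_[p])‖ = 1) :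
    distribHaarChar ℚ_[p] u = 1 := by
  refine distribHaarChar_eq_of_measure_smul_eq_mul (μ := padicHaar p)
    (s := Metric.closedBall 0 1) (by simp [padicHaar_closedBall_one])
    (by simp [padicHaar_closedBall_one]) ?_
  rw [ENNReal.coe_one, one_mul, Units.smul_def, smul_closedBall' u.ne_zero, hu, smul_zero, one_mul]

theorem distribHaarChar_prime {π : ℚ_[p]ˣ} (hπ : (π : ℚ_[p]) = p) :
    distribHaarChar ℚ_[p] π = (p : ℝ≥0)⁻¹ := by
  have hp0 : (p : ℝ≥0) ≠ 0 := by exact_mod_cast hp.out.ne_zero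
  have hball : π • Metric.closedBall (0 : ℚ_[p]) 1 = Metric.ball 0 1 := by
    rw [Units.smul_def, smul_closedBall' π.ne_zero, smul_zero, mul_one, hπ]
    ext x
    have := Padic.norm_le_pow_iff_norm_lt_pow_add_one x (-1)
    simpa using this
  refine distribHaarChar_eq_of_measure_smul_eq_mul (μ := padicHaar p)
    (s := Metric.closedBall 0 1) (by simp [padicHaar_closedBall_one])
    (by simp [padicHaar_closedBall_one]) ?_
  rw [hball, padicHaar_ball_one, padicHaar_closedBall_one, mul_one, ENNReal.coe_inv hp0,
    ENNReal.coe_natCast]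

theorem distribHaarChar_padic (u : ℚ_[p]ˣ) : distribHaarChar ℚ_[p] u = ‖(u : ℚ_[p])‖₊ := by
  have hp0 : (p : ℚ_[p]) ≠ 0 := by exact_mod_cast hp.out.ne_zero
  set n := (u : ℚ_[p]).valuation
  set π : ℚ_[p]ˣ := Units.mk0 p hp0
  have hπ : ‖((π ^ n : ℚ_[p]ˣ) : ℚ_[p])‖ = ‖(u : ℚ_[p])‖ := by
    rw [Padic.norm_eq_zpow_neg_valuation u.ne_zero, Units.val_zpow_eq_zpow_val, norm_zpow]
    simp [π, n]
  have hunit : distribHaarChar ℚ_[p] (u / π ^ n) = 1 := distribHaarChar_of_norm_eq_one (by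
    rw [Units.val_div_eq_div_val, norm_div, hπ, div_self (norm_ne_zero_iff.2 u.ne_zero)])
  rw [← div_mul_cancel u (π ^ n), map_mul, hunit, one_mul, map_zpow, distribHaarChar_prime rfl]
  refine NNReal.eq ?_
  rw [div_mul_cancel, coe_nnnorm, Padic.norm_eq_zpow_neg_valuation u.ne_zero]
  simp [n]

theorem lintegral_comp_mul_padicHaar {c : ℚ_[p]} (hc : c ≠ 0) {f : ℚ_[p] → ℝ≥0∞}
    (hf : Measurable f) :
    ∫⁻ x, f (c * x) ∂(padicHaar p) = (‖c‖₊ : ℝ≥0∞)⁻¹ * ∫⁻ x, f x ∂(padicHaar p) := by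
  have hmap : Measure.map (c * ·) (padicHaar p) = (‖c‖₊ : ℝ≥0∞)⁻¹ • padicHaar p := by
    refine Measure.ext fun t ht => ?_
    have hpre : (c * ·) ⁻¹' t = (Units.mk0 c hc)⁻¹ • t := by
      rw [← Set.preimage_smul]
      rfl
    rw [Measure.map_apply (measurable_const_mul c) ht, hpre, ← distribHaarChar_mul, map_inv,
      distribHaarChar_padic, Units.val_mk0, ENNReal.coe_inv (by simpa using hc),
      Measure.smul_apply, smul_eq_mul]
  rw [← lintegral_map hf (measurable_const_mul c), hmap, lintegral_smul_measure, smul_eq_mul]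

end Haar

section MultiplicativeHaar

variable {p : ℕ} [hp : Fact p.Prime]

/-- The multiplicative Haar measure `dx / |x|` of `ℚ_pˣ`, as a measure on `ℚ_p`. Scalings and the
inversion preserve it, which makes it the convenient measure for changes of variables. -/
def padicMulHaar (p : ℕ) [Fact p.Prime] : Measure ℚ_[p] :=
  (padicHaar p).withDensity fun x => ((‖x‖₊⁻¹ : ℝ≥0) : ℝ≥0∞)

instance padicMulHaar_sigmaFinite : SigmaFinite (padicMulHaar p) :=
  SigmaFinite.withDensity _

theorem ae_ne_zero_padicHaar : ∀ᵐ x ∂(padicHaar p), x ≠ 0 :=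
  compl_mem_ae_iff.2 (measure_singleton 0)

theorem padicMulHaar_withDensity_nnnorm :
    (padicMulHaar p).withDensity (fun x => (‖x‖₊ : ℝ≥0∞)) = padicHaar p := by
  rw [padicMulHaar, ← withDensity_mul _ (by fun_prop) (by fun_prop)]
  refine (withDensity_congr_ae ?_).trans withDensity_one
  filter_upwards [ae_ne_zero_padicHaar] with x hx
  rw [Pi.mul_apply, ← ENNReal.coe_mul, inv_mul_cancel₀ (by simpa using hx), ENNReal.coe_one,
    Pi.one_apply]

theorem measurePreserving_mul_padicMulHaar {c : ℚ_[p]} (hc : c ≠ 0) :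
    MeasurePreserving (c * ·) (padicMulHaar p) (padicMulHaar p) := by
  have hcm : Measurable (c * · : ℚ_[p] → ℚ_[p]) := measurable_const_mul c
  refine ⟨hcm, Measure.ext fun t ht => ?_⟩
  set f : ℚ_[p] → ℝ≥0∞ := t.indicator fun x => ((‖x‖₊⁻¹ : ℝ≥0) : ℝ≥0∞)
  have hf : Measurable f := Measurable.indicator (by fun_prop) ht
  have hfc (x : ℚ_[p]) : ((c * ·) ⁻¹' t).indicator (fun x => ((‖x‖₊⁻¹ : ℝ≥0) : ℝ≥0∞)) x =
      (‖c‖₊ : ℝ≥0∞) * f (c * x) := by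
    by_cases hx : c * x ∈ t
    · rw [Set.indicator_of_mem (by exact hx), show f (c * x) = _ from Set.indicator_of_mem hx _,
        ← ENNReal.coe_mul, nnnorm_mul, mul_inv, mul_inv_cancel_left₀ (by simpa using hc)]
    · rw [Set.indicator_of_notMem (by exact hx),
        show f (c * x) = 0 from Set.indicator_of_notMem hx _, mul_zero]
  rw [Measure.map_apply hcm ht, padicMulHaar, withDensity_apply _ ht, withDensity_apply _ (hcm ht),
    ← lintegral_indicator ht, ← lintegral_indicator (hcm ht), lintegral_congr hfc,
    lintegral_const_mul' _ _ ENNReal.coe_ne_top, lintegral_comp_mul_padicHaar hc hf, ← mul_assoc,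
    ENNReal.mul_inv_cancel (by simpa using hc) ENNReal.coe_ne_top, one_mul]

theorem measurePreserving_inv_padicMulHaar :
    MeasurePreserving (fun x => x⁻¹) (padicMulHaar p) (padicMulHaar p) :=
  measurePreserving_inv_of_measurePreserving_mul
    ((withDensity_absolutelyContinuous _ _).ae_le ae_ne_zero_padicHaar)
    fun _ hc => measurePreserving_mul_padicMulHaar hc

end MultiplicativeHaar

section CoordinatewiseChangeOfVariables

variable {p : ℕ} [hp : Fact p.Prime] {ι : Type}

theorem measurableEmbedding_coordinatewise (φ : ℚ_[p] ≃ᵐ ℚ_[p]) :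
    MeasurableEmbedding fun (x : ι → ℚ_[p]) i => φ (x i) :=
  (MeasurableEquiv.piCongrRight fun _ : ι => φ).measurableEmbedding

variable [Fintype ι]

instance padicPi_isAddHaarMeasure : (padicPi p ι).IsAddHaarMeasure := by
  unfold padicPi; infer_instance

theorem padicPi_eq_withDensity :
    padicPi p ι = (Measure.pi fun _ : ι => padicMulHaar p).withDensity
      fun x => ((∏ i, ‖x i‖₊ : ℝ≥0) : ℝ≥0∞) := by
  rw [← pi_withDensity fun _ => measurable_nnnorm]
  simp_rw [padicMulHaar_withDensity_nnnorm]
  rfl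

variable {E : Type*} [NormedAddCommGroup E] [NormedSpace ℝ E] {F G : (ι → ℚ_[p]) → E}
  {S : Set (ι → ℚ_[p])} {φ : ℚ_[p] ≃ᵐ ℚ_[p]}

theorem integrableOn_padicPi_iff_mulHaar (hS : MeasurableSet S) :
    IntegrableOn F S (padicPi p ι) ↔
      IntegrableOn (fun x => (∏ i, ‖x i‖₊) • F x) S (Measure.pi fun _ => padicMulHaar p) := by
  rw [padicPi_eq_withDensity, IntegrableOn, restrict_withDensity hS,
    integrable_withDensity_iff_integrable_smul (by fun_prop), IntegrableOn]

theorem setIntegral_padicPi_eq_mulHaar (hS : MeasurableSet S) :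
    ∫ x in S, F x ∂(padicPi p ι) =
      ∫ x in S, (∏ i, ‖x i‖₊) • F x ∂(Measure.pi fun _ => padicMulHaar p) := by
  rw [padicPi_eq_withDensity, setIntegral_withDensity_eq_setIntegral_smul (by fun_prop) _ hS]

theorem integrableOn_padicPi_coordinatewise (hS : MeasurableSet S)
    (hφ : MeasurePreserving φ (padicMulHaar p) (padicMulHaar p))
    (hFG : ∀ x, (∏ i, ‖φ (x i)‖₊) • F (fun i => φ (x i)) = (∏ i, ‖x i‖₊) • G x) :
    IntegrableOn F S (padicPi p ι) ↔
      IntegrableOn G ((fun x i => φ (x i)) ⁻¹' S) (padicPi p ι) := by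
  have hemb := measurableEmbedding_coordinatewise (ι := ι) φ
  rw [integrableOn_padicPi_iff_mulHaar hS, integrableOn_padicPi_iff_mulHaar (hemb.measurable hS),
    ← (measurePreserving_pi _ _ fun _ => hφ).integrableOn_comp_preimage hemb]
  exact iff_of_eq (congrArg (IntegrableOn · _ _) (funext hFG))

theorem setIntegral_padicPi_coordinatewise (hS : MeasurableSet S)
    (hφ : MeasurePreserving φ (padicMulHaar p) (padicMulHaar p))
    (hFG : ∀ x, (∏ i, ‖φ (x i)‖₊) • F (fun i => φ (x i)) = (∏ i, ‖x i‖₊) • G x) :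
    ∫ x in S, F x ∂(padicPi p ι) = ∫ x in (fun x i => φ (x i)) ⁻¹' S, G x ∂(padicPi p ι) := by
  have hemb := measurableEmbedding_coordinatewise (ι := ι) φ
  rw [setIntegral_padicPi_eq_mulHaar hS, setIntegral_padicPi_eq_mulHaar (hemb.measurable hS),
    ← (measurePreserving_pi _ _ fun _ => hφ).setIntegral_preimage_emb hemb]
  exact integral_congr_ae (ae_of_all _ hFG)

end CoordinatewiseChangeOfVariables

section Pairs

theorem mem_pairsIn {A : Finset ℕ} {q : ℕ × ℕ} :
    q ∈ pairsIn A ↔ (q.1 ∈ A ∧ q.2 ∈ A) ∧ q.1 < q.2 := by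
  simp [pairsIn]

@[simp]
theorem pairsIn_singleton (v : ℕ) : pairsIn {v} = ∅ := by
  ext q
  simp only [mem_pairsIn, mem_singleton, notMem_empty, iff_false]
  omega

@[to_additive]
theorem prod_pairsIn_union {M : Type*} [CommMonoid M] {U V : Finset ℕ} (hUV : Disjoint U V)
    {h : ℕ → ℕ → M} (hsymm : ∀ i j, h i j = h j i) :
    ∏ q ∈ pairsIn (U ∪ V), h q.1 q.2 =
      (∏ q ∈ pairsIn U, h q.1 q.2) * (∏ q ∈ pairsIn V, h q.1 q.2) * ∏ i ∈ U, ∏ j ∈ V, h i j := by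
  have hcross : ∏ i ∈ U, ∏ j ∈ V, h i j =
      (∏ i ∈ U, ∏ j ∈ V, if i < j then h i j else 1) *
        ∏ i ∈ V, ∏ j ∈ U, if i < j then h i j else 1 := by
    rw [prod_comm (s := V), ← prod_mul_distrib]
    refine prod_congr rfl fun i hi => ?_
    rw [← prod_mul_distrib]
    refine prod_congr rfl fun j hj => ?_
    have hne : i ≠ j := fun e => disjoint_left.1 hUV hi (e ▸ hj)
    rcases lt_or_gt_of_ne hne with hlt | hlt
    · simp [hlt, hlt.le]
    · simp [hlt, hlt.le, hsymm i j]
  simp only [pairsIn, prod_filter, prod_product, prod_union hUV, prod_mul_distrib, hcross]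
  ac_rfl

theorem sum_pairsIn_insert {M : Type*} [AddCommMonoid M] {A : Finset ℕ} {v : ℕ} (hv : v ∉ A)
    {h : ℕ → ℕ → M} (hsymm : ∀ i j, h i j = h j i) :
    ∑ q ∈ pairsIn (insert v A), h q.1 q.2 = ∑ q ∈ pairsIn A, h q.1 q.2 + ∑ i ∈ A, h v i := by
  rw [insert_eq, sum_pairsIn_union (disjoint_singleton_left.2 hv) hsymm, pairsIn_singleton,
    sum_empty, zero_add, sum_singleton]

@[to_additive]
theorem prod_prod_erase {M : Type*} [CommMonoid M] (A : Finset ℕ) (h : ℕ → ℕ → M) :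
    ∏ i ∈ A, ∏ j ∈ A.erase i, h i j = ∏ q ∈ pairsIn A, h q.1 q.2 * h q.2 q.1 := by
  have hsplit : ∀ i ∈ A, ∏ j ∈ A.erase i, h i j =
      (∏ j ∈ A, if i < j then h i j else 1) * ∏ j ∈ A, if j < i then h i j else 1 := by
    intro i _
    rw [← prod_mul_distrib, ← filter_ne', prod_filter]
    refine prod_congr rfl fun j _ => ?_
    rcases lt_trichotomy i j with hij | rfl | hij
    · simp [hij, hij.ne', hij.not_gt]
    · simp
    · simp [hij, hij.ne, hij.not_gt]
  rw [prod_congr rfl hsplit, prod_mul_distrib,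
    prod_comm (f := fun i j => if j < i then h i j else 1)]
  simp only [pairsIn, prod_filter, prod_product, ← prod_mul_distrib]
  refine prod_congr rfl fun i _ => prod_congr rfl fun j _ => ?_
  split_ifs <;> simp

theorem sum_pairsIn_filter_mem {M : Type*} [AddCommGroup M] {T J : Finset ℕ} (hJ : J ⊆ T)
    {h : ℕ → ℕ → M} (hsymm : ∀ i j, h i j = h j i) :
    ∑ q ∈ (pairsIn T).filter (fun q => q.1 ∈ J), h q.1 q.2 +
        ∑ q ∈ (pairsIn T).filter (fun q => q.1 ∉ J ∧ q.2 ∈ J), h q.1 q.2 =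
      ∑ q ∈ pairsIn J, h q.1 q.2 + ∑ i ∈ J, ∑ j ∈ T \ J, h i j := by
  have hT := sum_pairsIn_union (disjoint_sdiff (s := J) (t := T)) hsymm
  rw [union_sdiff_of_subset hJ, ← sum_filter_add_sum_filter_not _ fun q => q.1 ∈ J,
    ← sum_filter_add_sum_filter_not ((pairsIn T).filter fun q => q.1 ∉ J) fun q => q.2 ∈ J,
    filter_filter, filter_filter] at hT
  have hrest : (pairsIn T).filter (fun q => q.1 ∉ J ∧ q.2 ∉ J) = pairsIn (T \ J) := by
    ext q
    simp only [mem_filter, mem_pairsIn, mem_sdiff]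
    tauto
  rw [hrest] at hT
  rw [← add_left_inj (∑ q ∈ pairsIn (T \ J), h q.1 q.2), add_assoc, hT]
  abel

end Pairs

section KobaNielsen

variable {K : Type*} [NormedField K] {α β : ℕ → ℂ} {s : ℕ → ℕ → ℂ} {A U V : Finset ℕ}
  {y z : ℕ → K}

/-- The Koba–Nielsen integrand of the points `y i`, `i ∈ A`, with the fixed points `0` and `1`.
The exponents `α i`, `β i` and `s i j` belong to `|y i|`, `|1 - y i|` and `|y i - y j|`. -/
def kobaNielsen (α β : ℕ → ℂ) (s : ℕ → ℕ → ℂ) (A : Finset ℕ) (y : ℕ → K) : ℂ :=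
  (∏ i ∈ A, (‖y i‖ : ℂ) ^ α i * (‖1 - y i‖ : ℂ) ^ β i) *
    ∏ q ∈ pairsIn A, (‖y q.1 - y q.2‖ : ℂ) ^ s q.1 q.2

theorem kobaNielsen_zero_right : kobaNielsen α 0 s A y =
    (∏ i ∈ A, (‖y i‖ : ℂ) ^ α i) * ∏ q ∈ pairsIn A, (‖y q.1 - y q.2‖ : ℂ) ^ s q.1 q.2 := by
  simp only [kobaNielsen, Pi.zero_apply, Complex.cpow_zero, mul_one]

theorem kobaNielsen_zero_zero :
    kobaNielsen 0 0 s A y = ∏ q ∈ pairsIn A, (‖y q.1 - y q.2‖ : ℂ) ^ s q.1 q.2 := by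
  simp only [kobaNielsen_zero_right, Pi.zero_apply, Complex.cpow_zero, prod_const_one, one_mul]

@[simp]
theorem kobaNielsen_empty : kobaNielsen α β s ∅ y = 1 := by
  simp [kobaNielsen, pairsIn]

theorem kobaNielsen_congr (h : ∀ i ∈ A, y i = z i) :
    kobaNielsen α β s A y = kobaNielsen α β s A z := by
  refine congrArg₂ (· * ·) (prod_congr rfl fun i hi => by rw [h i hi])
    (prod_congr rfl fun q hq => ?_)
  rw [h _ (mem_pairsIn.1 hq).1.1, h _ (mem_pairsIn.1 hq).1.2]

theorem kobaNielsen_one_sub :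
    kobaNielsen α β s A (fun i => 1 - y i) = kobaNielsen β α s A y := by
  simp only [kobaNielsen, sub_sub_cancel, sub_sub_sub_cancel_left,
    norm_sub_rev (y (Prod.snd _)), mul_comm]

theorem kobaNielsen_union (hs : ∀ i j, s i j = s j i) (hUV : Disjoint U V) (y : ℕ → K) :
    kobaNielsen α β s (U ∪ V) y = kobaNielsen α β s U y * kobaNielsen α β s V y *
      ∏ i ∈ U, ∏ j ∈ V, (‖y i - y j‖ : ℂ) ^ s i j := by
  unfold kobaNielsen
  rw [prod_union hUV, prod_pairsIn_union (h := fun i j => (‖y i - y j‖ : ℂ) ^ s i j) hUV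
    fun i j => by rw [hs i j, norm_sub_rev]]
  ring

theorem kobaNielsen_insert (hs : ∀ i j, s i j = s j i) {v : ℕ} (hv : v ∉ A) :
    kobaNielsen 0 0 s (insert v A) y = kobaNielsen (s v) 0 s A fun i => y i - y v := by
  rw [insert_eq, kobaNielsen_union hs (disjoint_singleton_left.2 hv), kobaNielsen_zero_zero,
    kobaNielsen_zero_zero, kobaNielsen_zero_right, pairsIn_singleton, prod_empty, one_mul,
    prod_singleton, mul_comm]
  simp only [sub_sub_sub_cancel_right, norm_sub_rev (y v)]

theorem cpow_sum {ι : Type*} {x : ℂ} (hx : x ≠ 0) (f : ι → ℂ) (t : Finset ι) :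
    x ^ ∑ i ∈ t, f i = ∏ i ∈ t, x ^ f i := by
  classical
  induction t using Finset.induction_on with
  | empty => simp
  | insert i t hi ih => rw [sum_insert hi, prod_insert hi, Complex.cpow_add _ _ hx, ih]

theorem kobaNielsen_mul {c : K} (hc : c ≠ 0) :
    kobaNielsen α 0 s A (fun i => c * y i) =
      (‖c‖ : ℂ) ^ (∑ i ∈ A, α i + ∑ q ∈ pairsIn A, s q.1 q.2) * kobaNielsen α 0 s A y := by
  have hc' : (‖c‖ : ℂ) ≠ 0 := by simpa using hc
  rw [Complex.cpow_add _ _ hc', cpow_sum hc', cpow_sum hc']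
  simp only [kobaNielsen_zero_right, ← mul_sub, norm_mul, Complex.ofReal_mul,
    Complex.mul_cpow_ofReal_nonneg (norm_nonneg _) (norm_nonneg _), prod_mul_distrib]
  ring

theorem kobaNielsen_inv (hs : ∀ i j, s i j = s j i) (hy : ∀ i ∈ A, y i ≠ 0) :
    kobaNielsen α 0 s A (fun i => (y i)⁻¹) =
      kobaNielsen (fun i => -α i - ∑ j ∈ A.erase i, s i j) 0 s A y := by
  have hy' : ∀ i ∈ A, (‖y i‖ : ℂ) ≠ 0 := fun i hi => by simpa using hy i hi
  have hone : ∀ i ∈ A, (‖(y i)⁻¹‖ : ℂ) ^ α i = (‖y i‖ : ℂ) ^ (-α i) := fun i _ => by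
    rw [norm_inv, Complex.ofReal_inv, Complex.inv_cpow_ofReal_nonneg (norm_nonneg _),
      Complex.cpow_neg]
  have hpair : ∀ q ∈ pairsIn A, (‖(y q.1)⁻¹ - (y q.2)⁻¹‖ : ℂ) ^ s q.1 q.2 =
      ((‖y q.1‖ : ℂ) ^ (-s q.1 q.2) * (‖y q.2‖ : ℂ) ^ (-s q.2 q.1)) *
        (‖y q.1 - y q.2‖ : ℂ) ^ s q.1 q.2 := fun q hq => by
    have h1 := hy _ (mem_pairsIn.1 hq).1.1
    have h2 := hy _ (mem_pairsIn.1 hq).1.2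
    have hsub : ‖(y q.1)⁻¹ - (y q.2)⁻¹‖ = ‖y q.1‖⁻¹ * ‖y q.2‖⁻¹ * ‖y q.1 - y q.2‖ := by
      rw [inv_sub_inv h1 h2, norm_div, norm_mul, norm_sub_rev]
      field_simp
    rw [hsub, hs q.2 q.1, Complex.ofReal_mul,
      Complex.mul_cpow_ofReal_nonneg (by positivity) (norm_nonneg _), Complex.ofReal_mul,
      Complex.mul_cpow_ofReal_nonneg (by positivity) (by positivity), Complex.ofReal_inv,
      Complex.ofReal_inv, Complex.inv_cpow_ofReal_nonneg (norm_nonneg _),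
      Complex.inv_cpow_ofReal_nonneg (norm_nonneg _), Complex.cpow_neg, Complex.cpow_neg]
  have hsplit : ∀ i ∈ A, (‖y i‖ : ℂ) ^ (-α i - ∑ j ∈ A.erase i, s i j) =
      (‖y i‖ : ℂ) ^ (-α i) * ∏ j ∈ A.erase i, (‖y i‖ : ℂ) ^ (-s i j) := fun i hi => by
    rw [sub_eq_add_neg, ← sum_neg_distrib, Complex.cpow_add _ _ (hy' i hi),
      cpow_sum (hy' i hi)]
  rw [kobaNielsen_zero_right, kobaNielsen_zero_right, prod_congr rfl hone,
    prod_congr rfl hpair, prod_congr rfl hsplit, prod_mul_distrib,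
    prod_mul_distrib (s := A), prod_prod_erase A fun i j => (‖y i‖ : ℂ) ^ (-s i j), mul_assoc]

theorem kobaNielsen_of_norm_eq_one {α' : ℕ → ℂ} (hy : ∀ i ∈ A, ‖y i‖ = 1) :
    kobaNielsen α β s A y = kobaNielsen α' β s A y := by
  refine congrArg (· * _) (prod_congr rfl fun i hi => ?_)
  rw [hy i hi, Complex.ofReal_one, Complex.one_cpow, Complex.one_cpow]

section Ultrametric

variable [IsUltrametricDist K]

theorem norm_sub_eq_of_norm_lt {x y : K} (h : ‖x‖ < ‖y‖) : ‖x - y‖ = ‖y‖ := by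
  rw [sub_eq_add_neg, IsUltrametricDist.norm_add_eq_max_of_norm_ne_norm (by simpa using h.ne),
    norm_neg, max_eq_right h.le]

theorem norm_sub_le_one_iff {x y : K} (hy : ‖y‖ ≤ 1) : ‖x - y‖ ≤ 1 ↔ ‖x‖ ≤ 1 := by
  refine ⟨fun h => ?_, fun h => by
    simpa [sub_eq_add_neg] using (IsUltrametricDist.norm_add_le_max x (-y)).trans
      (max_le h (by simpa using hy))⟩
  simpa using (IsUltrametricDist.norm_add_le_max (x - y) y).trans (max_le h hy)

theorem norm_one_sub_eq_one {x : K} (h : ‖x‖ < 1) : ‖1 - x‖ = 1 := by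
  rw [norm_sub_rev, norm_sub_eq_of_norm_lt (by rwa [norm_one]), norm_one]

theorem kobaNielsen_union_of_norm_lt (hs : ∀ i j, s i j = s j i) (hUV : Disjoint U V)
    (hV : ∀ j ∈ V, y j ≠ 0) (hlt : ∀ i ∈ U, ∀ j ∈ V, ‖y i‖ < ‖y j‖) :
    kobaNielsen α β s (U ∪ V) y =
      kobaNielsen α β s U y * kobaNielsen (fun j => α j + ∑ i ∈ U, s j i) β s V y := by
  have hcross : ∏ i ∈ U, ∏ j ∈ V, (‖y i - y j‖ : ℂ) ^ s i j =
      ∏ j ∈ V, (‖y j‖ : ℂ) ^ ∑ i ∈ U, s j i := by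
    rw [prod_comm]
    refine prod_congr rfl fun j hj => ?_
    rw [cpow_sum (by simpa using hV j hj)]
    exact prod_congr rfl fun i hi => by rw [norm_sub_eq_of_norm_lt (hlt i hi j hj), hs]
  rw [kobaNielsen_union hs hUV, hcross, mul_assoc]
  congr 1
  simp only [kobaNielsen]
  rw [mul_right_comm, ← prod_mul_distrib]
  refine congrArg (· * _) (prod_congr rfl fun j hj => ?_)
  rw [Complex.cpow_add _ _ (by simpa using hV j hj)]
  ring

theorem kobaNielsen_of_norm_lt_one (hy : ∀ i ∈ A, ‖y i‖ < 1) :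
    kobaNielsen α β s A y = kobaNielsen α 0 s A y := by
  refine congrArg (· * _) (prod_congr rfl fun i hi => ?_)
  rw [norm_one_sub_eq_one (hy i hi), Complex.ofReal_one, Complex.one_cpow, Complex.one_cpow]

theorem kobaNielsen_of_one_lt_norm (hy : ∀ i ∈ A, 1 < ‖y i‖) :
    kobaNielsen α β s A y = kobaNielsen (fun i => α i + β i) 0 s A y := by
  refine congrArg (· * _) (prod_congr rfl fun i hi => ?_)
  have hyi : (‖y i‖ : ℂ) ≠ 0 := by exact_mod_cast (one_pos.trans (hy i hi)).ne'
  rw [norm_sub_eq_of_norm_lt (by simpa using hy i hi), Complex.cpow_add _ _ hyi, Pi.zero_apply,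
    Complex.cpow_zero, mul_one]

end Ultrametric

end KobaNielsen

section Coordinates

variable {p : ℕ} [hp : Fact p.Prime] {A U V : Finset ℕ} {S S' : Set ℚ_[p]}

theorem padicCoord_of_mem (x : A → ℚ_[p]) {n : ℕ} (hn : n ∈ A) : padicCoord x n = x ⟨n, hn⟩ :=
  dif_pos hn

@[simp]
theorem padicCoord_coe (x : A → ℚ_[p]) (i : A) : padicCoord x i = x i :=
  padicCoord_of_mem x i.2

@[fun_prop]
theorem measurable_padicCoord (n : ℕ) : Measurable fun x : A → ℚ_[p] => padicCoord x n := by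
  unfold padicCoord
  split_ifs <;> fun_prop

/-- Restriction of the coordinates to the index sets `U` and `V`. -/
def padicSplit (U V : Finset ℕ) (x : A → ℚ_[p]) : (U → ℚ_[p]) × (V → ℚ_[p]) :=
  (fun i => padicCoord x i, fun j => padicCoord x j)

theorem padicCoord_padicSplit_fst (x : A → ℚ_[p]) {i : ℕ} (hi : i ∈ U) :
    padicCoord (padicSplit U V x).1 i = padicCoord x i :=
  padicCoord_of_mem _ hi

theorem padicCoord_padicSplit_snd (x : A → ℚ_[p]) {i : ℕ} (hi : i ∈ V) :
    padicCoord (padicSplit U V x).2 i = padicCoord x i :=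
  padicCoord_of_mem _ hi

theorem padicSplit_eq_piFinsetUnion_symm (hUV : Disjoint U V) :
    (padicSplit U V : (↥(U ∪ V) → ℚ_[p]) → _) =
      (MeasurableEquiv.piFinsetUnion (fun _ : ℕ => ℚ_[p]) hUV).symm := by
  ext x i
  · exact padicCoord_of_mem x (mem_union_left V i.2)
  · exact padicCoord_of_mem x (mem_union_right U i.2)

theorem measurePreserving_padicSplit (hA : U ∪ V = A) (hUV : Disjoint U V) :
    MeasurePreserving (padicSplit U V) (padicPi p A) ((padicPi p U).prod (padicPi p V)) := by
  subst hA
  rw [padicSplit_eq_piFinsetUnion_symm hUV]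
  exact (measurePreserving_piFinsetUnion hUV fun _ => padicHaar p).symm

theorem measurableEmbedding_padicSplit (hA : U ∪ V = A) (hUV : Disjoint U V) :
    MeasurableEmbedding (padicSplit U V : (A → ℚ_[p]) → _) := by
  subst hA
  rw [padicSplit_eq_piFinsetUnion_symm hUV]
  exact MeasurableEquiv.measurableEmbedding _

theorem ae_padicCoord_ne {i : ℕ} (hi : i ∈ A) (c : ℚ_[p]) :
    ∀ᵐ x ∂(padicPi p A), padicCoord x i ≠ c := by
  simp only [padicCoord_of_mem _ hi]
  exact Measure.ae_eval_ne (fun _ : A => padicHaar p) ⟨i, hi⟩ c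

theorem ae_padicCoord_ne_padicCoord {i j : ℕ} (hi : i ∈ A) (hj : j ∈ A) (hij : i ≠ j) :
    ∀ᵐ x ∂(padicPi p A), padicCoord x i ≠ padicCoord x j := by
  have hj' : j ∈ A \ {i} := by simp [hj, hij.symm]
  have hsplit := measurePreserving_padicSplit (p := p)
    (union_sdiff_of_subset (singleton_subset_iff.2 hi)) disjoint_sdiff
  have hmeas : MeasurableSet {z : (({i} : Finset ℕ) → ℚ_[p]) × (↥(A \ {i}) → ℚ_[p]) |
      padicCoord z.1 i ≠ padicCoord z.2 j} :=
    (measurableSet_eq_fun (by fun_prop) (by fun_prop)).compl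
  have hprod : ∀ᵐ z ∂(padicPi p ({i} : Finset ℕ)).prod (padicPi p ↥(A \ {i})),
      padicCoord z.1 i ≠ padicCoord z.2 j :=
    (Measure.ae_prod_iff_ae_ae hmeas).2 <| ae_of_all _ fun u =>
      (ae_padicCoord_ne hj' (padicCoord u i)).mono fun v hv => hv.symm
  filter_upwards [hsplit.quasiMeasurePreserving.ae hprod] with x hx
  rwa [padicCoord_padicSplit_fst x (mem_singleton_self i), padicCoord_padicSplit_snd x hj'] at hx

theorem ae_forall_padicCoord_ne (A : Finset ℕ) :
    ∀ᵐ x : A → ℚ_[p] ∂(padicPi p A), (∀ i, x i ≠ 0 ∧ x i ≠ 1) ∧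
      ∀ q ∈ pairsIn A, padicCoord x q.1 ≠ padicCoord x q.2 := by
  refine (ae_all_iff.2 fun i => ?_).and ((ae_ball_iff (pairsIn A).countable_toSet).2 fun q hq => ?_)
  · simpa using (ae_padicCoord_ne i.2 (0 : ℚ_[p])).and (ae_padicCoord_ne i.2 1)
  · obtain ⟨⟨h1, h2⟩, hlt⟩ := mem_pairsIn.1 hq
    exact ae_padicCoord_ne_padicCoord h1 h2 hlt.ne

/-- The product `S^A` as a subset of `ℚ_p^A`. -/
def padicBox (S : Set ℚ_[p]) (A : Finset ℕ) : Set (A → ℚ_[p]) :=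
  Set.univ.pi fun _ => S

theorem mem_padicBox {x : A → ℚ_[p]} : x ∈ padicBox S A ↔ ∀ i ∈ A, padicCoord x i ∈ S := by
  refine ⟨fun h i hi => ?_, fun h i _ => by simpa using h i i.2⟩
  rw [padicCoord_of_mem x hi]
  exact h ⟨i, hi⟩ trivial

theorem measurableSet_padicBox (hS : MeasurableSet S) : MeasurableSet (padicBox S A) :=
  MeasurableSet.univ_pi fun _ => hS

/-- The points of `ℚ_p^A` whose coordinates lie in `S` for the indices in `U`, and in `S'` for the
other indices. -/
def padicCell (S S' : Set ℚ_[p]) (U A : Finset ℕ) : Set (A → ℚ_[p]) :=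
  padicSplit U (A \ U) ⁻¹' (padicBox S U ×ˢ padicBox S' (A \ U))

theorem mem_padicCell {x : A → ℚ_[p]} : x ∈ padicCell S S' U A ↔
    (∀ i ∈ U, padicCoord x i ∈ S) ∧ ∀ i ∈ A \ U, padicCoord x i ∈ S' := by
  rw [padicCell, Set.mem_preimage, Set.mem_prod, mem_padicBox, mem_padicBox]
  exact and_congr (forall₂_congr fun i hi => by rw [padicCoord_padicSplit_fst x hi])
    (forall₂_congr fun i hi => by rw [padicCoord_padicSplit_snd x hi])

theorem measurableSet_padicCell (hU : U ⊆ A) (hS : MeasurableSet S) (hS' : MeasurableSet S') :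
    MeasurableSet (padicCell S S' U A) :=
  (measurableEmbedding_padicSplit (union_sdiff_of_subset hU) disjoint_sdiff).measurable
    ((measurableSet_padicBox hS).prod (measurableSet_padicBox hS'))

open Classical in
theorem mem_padicCell_filter {x : A → ℚ_[p]} (hx : x ∈ padicBox (S ∪ S') A) :
    x ∈ padicCell S S' (A.filter fun i => padicCoord x i ∈ S) A := by
  rw [mem_padicBox] at hx
  refine mem_padicCell.2 ⟨fun i hi => (mem_filter.1 hi).2, fun i hi => ?_⟩
  simp only [mem_sdiff, mem_filter, not_and] at hi
  exact (hx i hi.1).resolve_left (hi.2 hi.1)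

theorem padicBox_union_eq_biUnion (S S' : Set ℚ_[p]) (A : Finset ℕ) :
    padicBox (S ∪ S') A = ⋃ U ∈ A.powerset, padicCell S S' U A := by
  classical
  ext x
  simp only [Set.mem_iUnion, exists_prop, mem_powerset]
  refine ⟨fun hx => ⟨_, filter_subset _ _, mem_padicCell_filter hx⟩, ?_⟩
  rintro ⟨U, -, hx⟩
  refine mem_padicBox.2 fun i hi => ?_
  by_cases hiU : i ∈ U
  · exact Or.inl ((mem_padicCell.1 hx).1 i hiU)
  · exact Or.inr ((mem_padicCell.1 hx).2 i (mem_sdiff.2 ⟨hi, hiU⟩))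

theorem pairwiseDisjoint_padicCell (hSS' : Disjoint S S') :
    (A.powerset : Set (Finset ℕ)).PairwiseDisjoint fun U => padicCell S S' U A := by
  have hsubset : ∀ U ⊆ A, ∀ V, ∀ x ∈ padicCell S S' U A, x ∈ padicCell S S' V A → U ⊆ V := by
    intro U hU V x hx hx' i hi
    by_contra hiV
    exact Set.disjoint_left.1 hSS' ((mem_padicCell.1 hx).1 i hi)
      ((mem_padicCell.1 hx').2 i (mem_sdiff.2 ⟨hU hi, hiV⟩))
  refine fun U hU V hV hne => Set.disjoint_left.2 fun x hx hx' => hne ?_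
  exact (hsubset U (mem_powerset.1 hU) V x hx hx').antisymm
    (hsubset V (mem_powerset.1 hV) U x hx' hx)

section Factorization

variable {F : (A → ℚ_[p]) → ℂ} {f : (U → ℚ_[p]) → ℂ} {g : (↥(A \ U) → ℚ_[p]) → ℂ}

theorem integrableOn_padicCell (hU : U ⊆ A) (hS : MeasurableSet S) (hS' : MeasurableSet S')
    (hF : ∀ x ∈ padicCell S S' U A, F x = f (padicSplit U (A \ U) x).1 *
      g (padicSplit U (A \ U) x).2)
    (hf : IntegrableOn f (padicBox S U) (padicPi p U))
    (hg : IntegrableOn g (padicBox S' (A \ U)) (padicPi p ↥(A \ U))) :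
    IntegrableOn F (padicCell S S' U A) (padicPi p A) := by
  refine IntegrableOn.congr_fun ?_ (fun x hx => (hF x hx).symm) (measurableSet_padicCell hU hS hS')
  refine ((measurePreserving_padicSplit (union_sdiff_of_subset hU)
    disjoint_sdiff).integrableOn_comp_preimage (f := fun z => f z.1 * g z.2)
      (measurableEmbedding_padicSplit (union_sdiff_of_subset hU) disjoint_sdiff)).2 ?_
  rw [IntegrableOn, ← Measure.prod_restrict]
  exact hf.mul_prod hg

theorem setIntegral_padicCell (hU : U ⊆ A) (hS : MeasurableSet S) (hS' : MeasurableSet S')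
    (hF : ∀ x ∈ padicCell S S' U A, F x = f (padicSplit U (A \ U) x).1 *
      g (padicSplit U (A \ U) x).2) :
    ∫ x in padicCell S S' U A, F x ∂(padicPi p A) =
      (∫ x in padicBox S U, f x ∂(padicPi p U)) *
        ∫ x in padicBox S' (A \ U), g x ∂(padicPi p ↥(A \ U)) := by
  rw [setIntegral_congr_fun (measurableSet_padicCell hU hS hS') hF, padicCell,
    (measurePreserving_padicSplit (union_sdiff_of_subset hU)
      disjoint_sdiff).setIntegral_preimage_emb (g := fun z => f z.1 * g z.2)
      (measurableEmbedding_padicSplit (union_sdiff_of_subset hU) disjoint_sdiff),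
    setIntegral_prod_mul]

end Factorization

end Coordinates

section Convergence

variable {p : ℕ} [hp : Fact p.Prime] {α β : ℕ → ℂ} {s : ℕ → ℕ → ℂ} {A U : Finset ℕ}
  {S S' : Set ℚ_[p]}

/-- Absolute convergence of the Koba–Nielsen integral over `S^A`. -/
def KobaNielsenIntegrable (α β : ℕ → ℂ) (s : ℕ → ℕ → ℂ) (A : Finset ℕ) (S : Set ℚ_[p]) : Prop :=
  IntegrableOn (fun x => kobaNielsen α β s A (padicCoord x)) (padicBox S A) (padicPi p A)

/-- The degree of homogeneity of `kobaNielsen α 0 s A y ∏ dy i` under scaling of `y`. -/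
def homogeneityDegree (α : ℕ → ℂ) (s : ℕ → ℕ → ℂ) (A : Finset ℕ) : ℂ :=
  A.card + ∑ i ∈ A, α i + ∑ q ∈ pairsIn A, s q.1 q.2

theorem homogeneityDegree_zero_insert (hs : ∀ i j, s i j = s j i) {v : ℕ} (hv : v ∉ A) :
    homogeneityDegree 0 s (insert v A) = 1 + homogeneityDegree (s v) s A := by
  rw [homogeneityDegree, homogeneityDegree, card_insert_of_notMem hv, sum_pairsIn_insert hv hs]
  simp only [Pi.zero_apply, sum_const_zero]
  push_cast
  ring

theorem KobaNielsenIntegrable.mono (h : KobaNielsenIntegrable α β s A S') (hSS' : S ⊆ S') :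
    KobaNielsenIntegrable α β s A S :=
  h.mono_set (Set.pi_mono fun _ _ => hSS')

theorem kobaNielsenIntegrable_congr {α' β' : ℕ → ℂ} (hS : MeasurableSet S)
    (h : ∀ y : ℕ → ℚ_[p], (∀ i ∈ A, y i ∈ S) →
      kobaNielsen α β s A y = kobaNielsen α' β' s A y) :
    KobaNielsenIntegrable α β s A S ↔ KobaNielsenIntegrable α' β' s A S :=
  integrableOn_congr_fun (fun _ hx => h _ (mem_padicBox.1 hx)) (measurableSet_padicBox hS)

theorem kobaNielsenIntegrable_closedBall_swap :
    KobaNielsenIntegrable α β s A (Metric.closedBall (0 : ℚ_[p]) 1) ↔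
      KobaNielsenIntegrable β α s A (Metric.closedBall (0 : ℚ_[p]) 1) := by
  have hpre : (fun x : A → ℚ_[p] => 1 - x) ⁻¹' padicBox (Metric.closedBall 0 1) A =
      padicBox (Metric.closedBall 0 1) A := by
    ext x
    simp only [padicBox, Set.mem_preimage, Set.mem_univ_pi, mem_closedBall_zero_iff, Pi.sub_apply,
      Pi.one_apply]
    exact forall_congr' fun i => by rw [norm_sub_rev, norm_sub_le_one_iff norm_one.le]
  rw [KobaNielsenIntegrable, ← (Measure.measurePreserving_sub_left _ 1).integrableOn_comp_preimage
    (MeasurableEquiv.subLeft 1).measurableEmbedding, hpre]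
  refine iff_of_eq (congrArg (IntegrableOn · _ _) (funext fun x => ?_))
  rw [← kobaNielsen_one_sub]
  exact kobaNielsen_congr fun i hi => by simp [padicCoord_of_mem _ hi]

theorem measurePreserving_padicSplit_sub {v : ℕ} (hv : v ∉ A) :
    MeasurePreserving (fun x : ↥(insert v A) → ℚ_[p] =>
        ((padicSplit {v} A x).1, fun i : A => padicCoord x i - padicCoord x v))
      (padicPi p ↥(insert v A)) ((padicPi p ({v} : Finset ℕ)).prod (padicPi p A)) := by
  have hshear : MeasurePreserving (fun z : (({v} : Finset ℕ) → ℚ_[p]) × (A → ℚ_[p]) =>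
      (z.1, z.2 - fun _ => padicCoord z.1 v)) ((padicPi p _).prod (padicPi p _))
      ((padicPi p _).prod (padicPi p _)) :=
    (MeasurePreserving.id _).skew_product (g := fun u w => w - fun _ => padicCoord u v)
      (by unfold Function.uncurry; fun_prop)
      (ae_of_all _ fun u => (measurePreserving_sub_right (padicPi p A) _).map_eq)
  convert hshear.comp (measurePreserving_padicSplit (insert_eq v A).symm
    (disjoint_singleton_left.2 hv)) using 1
  ext x i
  · rfl
  · simp [padicSplit, padicCoord_of_mem _ (mem_singleton_self v)]

theorem KobaNielsenIntegrable.insert {v : ℕ} (hs : ∀ i j, s i j = s j i) (hv : v ∉ A)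
    (h : KobaNielsenIntegrable (s v) 0 s A (Metric.closedBall (0 : ℚ_[p]) 1)) :
    KobaNielsenIntegrable 0 0 s (insert v A) (Metric.closedBall (0 : ℚ_[p]) 1) := by
  set B : Set ℚ_[p] := Metric.closedBall 0 1
  have hB : MeasurableSet B := Metric.isClosed_closedBall.measurableSet
  have hbox : MeasurableSet (padicBox B ({v} : Finset ℕ) ×ˢ padicBox B A) :=
    (measurableSet_padicBox hB).prod (measurableSet_padicBox hB)
  have hint : IntegrableOn (fun z : (({v} : Finset ℕ) → ℚ_[p]) × (A → ℚ_[p]) =>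
      kobaNielsen (s v) 0 s A (padicCoord z.2)) (padicBox B {v} ×ˢ padicBox B A)
      ((padicPi p _).prod (padicPi p A)) := by
    have : IsFiniteMeasure ((padicPi p ({v} : Finset ℕ)).restrict (padicBox B {v})) :=
      isFiniteMeasure_restrict.2 (by simp [padicPi, padicBox, B, padicHaar_closedBall_one])
    rw [IntegrableOn, ← Measure.prod_restrict]
    exact Integrable.comp_snd h _
  refine IntegrableOn.congr_fun ((((measurePreserving_padicSplit_sub hv).restrict_preimage
    hbox).integrable_comp_of_integrable hint).mono_measure (Measure.restrict_mono ?_ le_rfl))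
    (fun x _ => ?_) (measurableSet_padicBox hB)
  · intro x hx
    simp only [mem_padicBox, B, mem_closedBall_zero_iff] at hx
    refine Set.mem_prod.2 ⟨mem_padicBox.2 fun i hi => ?_, mem_padicBox.2 fun i hi => ?_⟩
    · rw [padicCoord_padicSplit_fst x hi]
      simpa [B] using hx i (insert_eq v A ▸ mem_union_left A hi)
    · rw [padicCoord_of_mem _ hi, mem_closedBall_zero_iff,
        norm_sub_le_one_iff (hx v (mem_insert_self v A))]
      exact hx i (mem_insert_of_mem hi)
  · simp only [Function.comp_apply]
    rw [kobaNielsen_insert hs hv]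
    exact kobaNielsen_congr fun i hi => padicCoord_of_mem _ hi

theorem prod_nnnorm_smul_kobaNielsen_mul {c : ℚ_[p]} (hc : c ≠ 0) (x : A → ℚ_[p]) :
    (∏ i, ‖c * x i‖₊) • kobaNielsen α 0 s A (padicCoord fun i => c * x i) =
      (∏ i, ‖x i‖₊) •
        ((‖c‖ : ℂ) ^ homogeneityDegree α s A * kobaNielsen α 0 s A (padicCoord x)) := by
  have hc' : (‖c‖ : ℂ) ≠ 0 := by simpa using hc
  have hcoord : kobaNielsen α 0 s A (padicCoord fun i => c * x i) =
      kobaNielsen α 0 s A (fun i => c * padicCoord x i) :=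
    kobaNielsen_congr fun i hi => by rw [padicCoord_of_mem _ hi, padicCoord_of_mem _ hi]
  rw [hcoord, kobaNielsen_mul hc, homogeneityDegree, add_assoc,
    Complex.cpow_add (A.card : ℂ) _ hc', Complex.cpow_natCast]
  simp only [nnnorm_mul, prod_mul_distrib, prod_const, card_univ, Fintype.card_coe, mul_smul,
    NNReal.smul_def, Complex.real_smul, NNReal.coe_pow, coe_nnnorm, Complex.ofReal_pow]
  ring

theorem preimage_mulLeft₀_sphere_norm {c : ℚ_[p]} (hc : c ≠ 0) :
    (fun (x : A → ℚ_[p]) i => MeasurableEquiv.mulLeft₀ c hc (x i)) ⁻¹' Metric.sphere 0 ‖c‖ =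
      Metric.sphere 0 1 := by
  ext x
  have hx : (fun i => MeasurableEquiv.mulLeft₀ c hc (x i)) = c • x := rfl
  rw [Set.mem_preimage, hx, mem_sphere_zero_iff_norm, mem_sphere_zero_iff_norm, norm_smul,
    mul_eq_left₀ (norm_ne_zero_iff.2 hc)]

theorem integrableOn_kobaNielsen_sphere {c : ℚ_[p]} (hc : c ≠ 0)
    (h : IntegrableOn (fun x => kobaNielsen α 0 s A (padicCoord x))
      (Metric.sphere (0 : A → ℚ_[p]) 1) (padicPi p A)) :
    IntegrableOn (fun x => kobaNielsen α 0 s A (padicCoord x))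
      (Metric.sphere (0 : A → ℚ_[p]) ‖c‖) (padicPi p A) := by
  rw [integrableOn_padicPi_coordinatewise Metric.isClosed_sphere.measurableSet
    (φ := MeasurableEquiv.mulLeft₀ c hc) (measurePreserving_mul_padicMulHaar hc)
    (prod_nnnorm_smul_kobaNielsen_mul hc), preimage_mulLeft₀_sphere_norm hc]
  exact h.const_mul _

theorem setIntegral_norm_kobaNielsen_sphere {c : ℚ_[p]} (hc : c ≠ 0) :
    ∫ x in Metric.sphere (0 : A → ℚ_[p]) ‖c‖, ‖kobaNielsen α 0 s A (padicCoord x)‖ ∂(padicPi p A) =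
      ‖c‖ ^ (homogeneityDegree α s A).re *
        ∫ x in Metric.sphere (0 : A → ℚ_[p]) 1, ‖kobaNielsen α 0 s A (padicCoord x)‖
          ∂(padicPi p A) := by
  rw [← integral_const_mul, setIntegral_padicPi_coordinatewise
    (φ := MeasurableEquiv.mulLeft₀ c hc) Metric.isClosed_sphere.measurableSet
    (measurePreserving_mul_padicMulHaar hc) fun x => ?_, preimage_mulLeft₀_sphere_norm hc]
  have h := congrArg norm (prod_nnnorm_smul_kobaNielsen_mul (α := α) (s := s) hc x)
  rwa [NNReal.smul_def, NNReal.smul_def, norm_smul, norm_smul, norm_mul,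
    Complex.norm_cpow_eq_rpow_re_of_pos (norm_pos_iff.2 hc), NNReal.norm_eq, NNReal.norm_eq] at h

theorem exists_norm_eq_norm_prime_pow {x : A → ℚ_[p]} (hx : ‖x‖ ≤ 1) (hx0 : x ≠ 0) :
    ∃ k : ℕ, ‖x‖ = ‖(p : ℚ_[p]) ^ k‖ := by
  obtain ⟨j, -⟩ := Function.ne_iff.1 hx0
  have : Nonempty A := ⟨j⟩
  obtain ⟨i, hi⟩ := Finite.exists_max fun i => ‖x i‖
  have hnorm : ‖x‖ = ‖x i‖ :=
    ((pi_norm_le_iff_of_nonneg (norm_nonneg _)).2 hi).antisymm (norm_le_pi_norm x i)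
  have hi0 : x i ≠ 0 := norm_ne_zero_iff.1 (hnorm ▸ norm_ne_zero_iff.2 hx0)
  obtain ⟨k, hk⟩ := Int.eq_ofNat_of_zero_le
    ((Padic.norm_le_one_iff_val_nonneg _).1 (hnorm ▸ hx))
  refine ⟨k, ?_⟩
  rw [hnorm, Padic.norm_eq_zpow_neg_valuation hi0, hk]
  simp

theorem KobaNielsenIntegrable.of_sphere (hA : A.Nonempty)
    (hd : 0 < (homogeneityDegree α s A).re)
    (h : IntegrableOn (fun x => kobaNielsen α 0 s A (padicCoord x))
      (Metric.sphere (0 : A → ℚ_[p]) 1) (padicPi p A)) :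
    KobaNielsenIntegrable α 0 s A (Metric.closedBall (0 : ℚ_[p]) 1) := by
  have hp1 : (1 : ℝ) < p := by exact_mod_cast hp.out.one_lt
  have hp0 (k : ℕ) : (p : ℚ_[p]) ^ k ≠ 0 := pow_ne_zero k (by exact_mod_cast hp.out.ne_zero)
  have hunion : IntegrableOn (fun x => kobaNielsen α 0 s A (padicCoord x))
      (⋃ k : ℕ, Metric.sphere (0 : A → ℚ_[p]) ‖(p : ℚ_[p]) ^ k‖) (padicPi p A) := by
    refine integrableOn_iUnion_of_summable_integral_norm
      (fun k => integrableOn_kobaNielsen_sphere (hp0 k) h) ?_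
    simp_rw [setIntegral_norm_kobaNielsen_sphere (hp0 _)]
    refine Summable.mul_right _ ?_
    have hgeom (k : ℕ) : ‖(p : ℚ_[p]) ^ k‖ ^ (homogeneityDegree α s A).re =
        ((p : ℝ)⁻¹ ^ (homogeneityDegree α s A).re) ^ k := by
      rw [norm_pow, Padic.norm_p, Real.rpow_pow_comm (by positivity)]
    simp_rw [hgeom]
    exact summable_geometric_of_lt_one (by positivity)
      (Real.rpow_lt_one (by positivity) (inv_lt_one_of_one_lt₀ hp1) hd)
  refine hunion.mono_set_ae ?_
  obtain ⟨i, hi⟩ := hA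
  filter_upwards [ae_padicCoord_ne hi (0 : ℚ_[p])] with x hx0 hx
  have hx1 : ‖x‖ ≤ 1 := (pi_norm_le_iff_of_nonneg zero_le_one).2 fun i => by
    simpa using hx i trivial
  obtain ⟨k, hk⟩ := exists_norm_eq_norm_prime_pow hx1 fun hx => hx0 (by
    rw [padicCoord_of_mem _ hi, hx, Pi.zero_apply])
  exact Set.mem_iUnion.2 ⟨k, mem_sphere_zero_iff_norm.2 hk⟩

theorem integrableOn_kobaNielsen_ball_sphere (hs : ∀ i j, s i j = s j i) (hU : U ⊆ A)
    (hball : KobaNielsenIntegrable α 0 s U (Metric.closedBall (0 : ℚ_[p]) 1))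
    (hsphere : KobaNielsenIntegrable 0 β s (A \ U) (Metric.closedBall (0 : ℚ_[p]) 1)) :
    IntegrableOn (fun x => kobaNielsen α β s A (padicCoord x))
      (padicCell (Metric.ball 0 1) (Metric.sphere 0 1) U A) (padicPi p A) := by
  refine integrableOn_padicCell hU Metric.isOpen_ball.measurableSet
    Metric.isClosed_sphere.measurableSet (fun x hx => ?_)
    (hball.mono Metric.ball_subset_closedBall) (hsphere.mono Metric.sphere_subset_closedBall)
  simp only [mem_padicCell, mem_ball_zero_iff, mem_sphere_zero_iff_norm] at hx
  obtain ⟨hxU, hxV⟩ := hx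
  rw [kobaNielsen_congr fun i hi => padicCoord_padicSplit_fst x hi,
    kobaNielsen_congr fun i hi => padicCoord_padicSplit_snd x hi,
    ← kobaNielsen_of_norm_lt_one (β := β) hxU,
    kobaNielsen_of_norm_eq_one (α' := fun j => α j + ∑ i ∈ U, s j i) hxV,
    ← kobaNielsen_union_of_norm_lt hs disjoint_sdiff
      (fun j hj => norm_ne_zero_iff.1 (by simp [hxV j hj]))
      (fun i hi j hj => (hxU i hi).trans_eq (hxV j hj).symm), union_sdiff_of_subset hU]

theorem sphere_subset_biUnion_padicCell (A : Finset ℕ) :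
    Metric.sphere (0 : A → ℚ_[p]) 1 ⊆
      ⋃ U ∈ A.ssubsets, padicCell (Metric.ball 0 1) (Metric.sphere 0 1) U A := by
  classical
  intro x hx
  rw [mem_sphere_zero_iff_norm] at hx
  refine Set.mem_biUnion (mem_ssubsets.2 ((filter_subset _ _).ssubset_of_ne fun hA => ?_))
    (mem_padicCell_filter (mem_padicBox.2 fun i hi => ?_))
  · refine hx.not_lt ((pi_norm_lt_iff one_pos).2 fun i => ?_)
    simpa using filter_eq_self.1 hA i i.2
  · rw [Metric.ball_union_sphere, padicCoord_of_mem x hi, mem_closedBall_zero_iff, ← hx]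
    exact norm_le_pi_norm x _

theorem kobaNielsenIntegrable_empty :
    KobaNielsenIntegrable α β s ∅ (Metric.closedBall (0 : ℚ_[p]) 1) := by
  simp only [KobaNielsenIntegrable, kobaNielsen_empty]
  exact integrableOn_const (by simp [padicPi, padicBox])

/- The exponent at the origin is void for the points of norm `1`, so one of them may be translated
to the origin. -/
theorem kobaNielsenIntegrable_zero_right (hs : ∀ i j, s i j = s j i)
    (hpair : ∀ J ⊆ A, 2 ≤ J.card → 1 < (homogeneityDegree 0 s J).re)
    (hdeg : ∀ J ⊆ A, J.Nonempty → 0 < (homogeneityDegree α s J).re) :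
    KobaNielsenIntegrable α 0 s A (Metric.closedBall (0 : ℚ_[p]) 1) := by
  induction A using Finset.strongInduction generalizing α with
  | H A ih =>
    obtain rfl | hA := A.eq_empty_or_nonempty
    · exact kobaNielsenIntegrable_empty
    refine .of_sphere hA (hdeg A subset_rfl hA) (IntegrableOn.mono_set
      (integrableOn_finset_iUnion.2 fun U hU => ?_) (sphere_subset_biUnion_padicCell A))
    rw [mem_ssubsets] at hU
    obtain ⟨v, hvA, hvU⟩ := exists_of_ssubset hU
    have hv : v ∈ A \ U := mem_sdiff.2 ⟨hvA, hvU⟩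
    have hsub : (A \ U).erase v ⊆ A := (erase_subset _ _).trans sdiff_subset
    refine integrableOn_kobaNielsen_ball_sphere hs hU.subset
      (ih U hU (fun J hJ => hpair J (hJ.trans hU.subset))
        fun J hJ => hdeg J (hJ.trans hU.subset)) ?_
    rw [← insert_erase hv]
    refine .insert hs (notMem_erase v _) (ih _ ⟨hsub, fun h => notMem_erase v _ (h hvA)⟩
      (fun J hJ => hpair J (hJ.trans hsub)) fun J hJ hJne => ?_)
    have hvJ : v ∉ J := fun h => notMem_erase v _ (hJ h)
    have h := hpair (insert v J) (insert_subset hvA (hJ.trans hsub))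
      (by rw [card_insert_of_notMem hvJ]; have := hJne.card_pos; omega)
    rw [homogeneityDegree_zero_insert hs hvJ, Complex.add_re, Complex.one_re] at h
    linarith

theorem kobaNielsenIntegrable_closedBall (hs : ∀ i j, s i j = s j i)
    (hpair : ∀ J ⊆ A, 2 ≤ J.card → 1 < (homogeneityDegree 0 s J).re)
    (hα : ∀ J ⊆ A, J.Nonempty → 0 < (homogeneityDegree α s J).re)
    (hβ : ∀ J ⊆ A, J.Nonempty → 0 < (homogeneityDegree β s J).re) :
    KobaNielsenIntegrable α β s A (Metric.closedBall (0 : ℚ_[p]) 1) := by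
  rw [KobaNielsenIntegrable, ← Metric.ball_union_sphere, padicBox_union_eq_biUnion]
  refine integrableOn_finset_iUnion.2 fun U hU => ?_
  rw [mem_powerset] at hU
  refine integrableOn_kobaNielsen_ball_sphere hs hU ?_ (kobaNielsenIntegrable_closedBall_swap.2 ?_)
  · exact kobaNielsenIntegrable_zero_right hs (fun J hJ => hpair J (hJ.trans hU))
      fun J hJ => hα J (hJ.trans hU)
  · exact kobaNielsenIntegrable_zero_right hs (fun J hJ => hpair J (hJ.trans sdiff_subset))
      fun J hJ => hβ J (hJ.trans sdiff_subset)

end Convergence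

section Infinity

variable {p : ℕ} [hp : Fact p.Prime] {α β γ : ℕ → ℂ} {s : ℕ → ℕ → ℂ} {A J : Finset ℕ}

/-- The exponents at the origin of the Koba–Nielsen integrand on the points indexed by `A` after
the inversion `y ↦ y⁻¹`, when `γ i` is the exponent of `|y i|`; the summand `2` is the Jacobian. -/
def exponentAtInfinity (γ : ℕ → ℂ) (s : ℕ → ℕ → ℂ) (A : Finset ℕ) (i : ℕ) : ℂ :=
  -(2 + γ i + ∑ j ∈ A.erase i, s i j)

theorem exponentAtInfinity_of_subset (hJ : J ⊆ A) {i : ℕ} (hi : i ∈ J) :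
    exponentAtInfinity (fun j => γ j + ∑ k ∈ A \ J, s j k) s J i = exponentAtInfinity γ s A i := by
  have herase : A.erase i = A \ J ∪ J.erase i := by
    ext j
    simp only [mem_erase, mem_union, mem_sdiff]
    have := @hJ j
    by_cases hj : j = i
    · simp [hj, hi]
    · tauto
  have hdisj : Disjoint (A \ J) (J.erase i) :=
    disjoint_sdiff_self_left.mono_right (erase_subset _ _)
  rw [exponentAtInfinity, exponentAtInfinity, herase, sum_union hdisj]
  ring

theorem homogeneityDegree_exponentAtInfinity (hs : ∀ i j, s i j = s j i) (hJ : J ⊆ A) :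
    homogeneityDegree (exponentAtInfinity γ s A) s J =
      -(J.card + ∑ i ∈ J, γ i + ∑ q ∈ (pairsIn A).filter (fun q => q.1 ∈ J), s q.1 q.2 +
        ∑ q ∈ (pairsIn A).filter (fun q => q.1 ∉ J ∧ q.2 ∈ J), s q.1 q.2) := by
  rw [add_assoc, sum_pairsIn_filter_mem hJ hs, homogeneityDegree,
    sum_congr rfl fun i hi => (exponentAtInfinity_of_subset hJ hi).symm]
  simp only [exponentAtInfinity, sum_neg_distrib, sum_add_distrib, sum_sum_erase, ← hs (Prod.fst _),
    sum_const, nsmul_eq_mul]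
  ring

theorem kobaNielsen_congr_left {α' : ℕ → ℂ} {y : ℕ → ℚ_[p]} (h : ∀ i ∈ A, α i = α' i) :
    kobaNielsen α β s A y = kobaNielsen α' β s A y :=
  congrArg (· * _) (prod_congr rfl fun i hi => by rw [h i hi])

theorem prod_nnnorm_smul_kobaNielsen_inv (hs : ∀ i j, s i j = s j i) (x : A → ℚ_[p]) :
    (∏ i, ‖(x i)⁻¹‖₊) • kobaNielsen γ 0 s A (padicCoord fun i => (x i)⁻¹) =
      (∏ i, ‖x i‖₊) • kobaNielsen (exponentAtInfinity γ s A) 0 s A (padicCoord x) := by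
  by_cases hx : ∃ i, x i = 0
  · obtain ⟨i, hi⟩ := hx
    rw [prod_eq_zero (mem_univ i) (by simp [hi]), prod_eq_zero (mem_univ i) (by simp [hi]),
      zero_smul, zero_smul]
  · push Not at hx
    have hcoord : kobaNielsen γ 0 s A (padicCoord fun i => (x i)⁻¹) =
        kobaNielsen γ 0 s A (fun i => (padicCoord x i)⁻¹) :=
      kobaNielsen_congr fun i hi => by rw [padicCoord_of_mem _ hi, padicCoord_of_mem _ hi]
    rw [hcoord, kobaNielsen_inv hs fun i hi => by rw [padicCoord_of_mem _ hi]; exact hx _]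
    have hprod : ∏ i, ‖(x i)⁻¹‖₊ = (∏ i, ‖x i‖₊) * ∏ i, ‖x i‖₊⁻¹ ^ 2 := by
      rw [← prod_mul_distrib]
      refine prod_congr rfl fun i _ => ?_
      have := nnnorm_ne_zero_iff.2 (hx i)
      rw [nnnorm_inv]
      field_simp
    have hjac : kobaNielsen (exponentAtInfinity γ s A) 0 s A (padicCoord x) =
        (∏ i, ‖x i‖₊⁻¹ ^ 2) •
          kobaNielsen (fun i => -γ i - ∑ j ∈ A.erase i, s i j) 0 s A (padicCoord x) := by
      rw [kobaNielsen_zero_right, kobaNielsen_zero_right, NNReal.smul_def, Complex.real_smul,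
        ← mul_assoc, ← prod_coe_sort A, ← prod_coe_sort A]
      push_cast
      rw [← prod_mul_distrib]
      refine congrArg (· * _) (prod_congr rfl fun i _ => ?_)
      have hxi : (‖x i‖ : ℂ) ≠ 0 := by simpa using hx i
      rw [padicCoord_coe, exponentAtInfinity, add_assoc, neg_add, neg_add',
        Complex.cpow_add _ _ hxi, Complex.cpow_neg, Complex.cpow_ofNat, inv_pow]
    rw [hjac, hprod, mul_smul]

theorem padicBox_diff_singleton_ae_eq (S : Set ℚ_[p]) (c : ℚ_[p]) :
    (padicBox (S \ {c}) A : Set (A → ℚ_[p])) =ᵐ[padicPi p A] padicBox S A := by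
  filter_upwards [(ae_ball_iff A.countable_toSet).2 fun i hi => ae_padicCoord_ne hi c] with x hx
  refine propext ?_
  change x ∈ padicBox _ A ↔ x ∈ padicBox _ A
  rw [mem_padicBox, mem_padicBox]
  exact forall₂_congr fun i hi => and_iff_left (hx i hi)

theorem preimage_inv_padicBox :
    (fun (x : A → ℚ_[p]) i => MeasurableEquiv.inv ℚ_[p] (x i)) ⁻¹'
      padicBox (Metric.closedBall 0 1)ᶜ A = padicBox (Metric.ball 0 1 \ {0}) A := by
  ext x
  refine forall₂_congr fun i _ => ?_
  have hx : 1 < ‖x i‖⁻¹ ↔ 0 < ‖x i‖ ∧ ‖x i‖ < 1 := one_lt_inv_iff₀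
  simpa [and_comm] using hx

theorem kobaNielsenIntegrable_compl_closedBall (hs : ∀ i j, s i j = s j i)
    (h : KobaNielsenIntegrable (exponentAtInfinity γ s A) 0 s A (Metric.closedBall (0 : ℚ_[p]) 1)) :
    KobaNielsenIntegrable γ 0 s A (Metric.closedBall (0 : ℚ_[p]) 1)ᶜ := by
  rw [KobaNielsenIntegrable, integrableOn_padicPi_coordinatewise (φ := MeasurableEquiv.inv ℚ_[p])
    (measurableSet_padicBox Metric.isClosed_closedBall.measurableSet.compl)
    measurePreserving_inv_padicMulHaar (prod_nnnorm_smul_kobaNielsen_inv hs), preimage_inv_padicBox]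
  exact h.mono (Set.sdiff_subset.trans Metric.ball_subset_closedBall)

theorem setIntegral_kobaNielsen_preimage_mul {c : ℚ_[p]} (hc : c ≠ 0) {S : Set ℚ_[p]}
    (hS : MeasurableSet S) :
    ∫ x in padicBox S A, kobaNielsen α 0 s A (padicCoord x) ∂(padicPi p A) =
      (‖c‖ : ℂ) ^ homogeneityDegree α s A *
        ∫ x in padicBox ((c * ·) ⁻¹' S) A, kobaNielsen α 0 s A (padicCoord x) ∂(padicPi p A) := by
  rw [← integral_const_mul]
  exact setIntegral_padicPi_coordinatewise (φ := MeasurableEquiv.mulLeft₀ c hc)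
    (measurableSet_padicBox hS) (measurePreserving_mul_padicMulHaar hc)
    (prod_nnnorm_smul_kobaNielsen_mul hc)

theorem preimage_mul_prime_ball :
    ((p : ℚ_[p]) * ·) ⁻¹' Metric.ball (0 : ℚ_[p]) 1 = Metric.closedBall 0 1 := by
  ext x
  have hp0 : (0 : ℝ) < p := by exact_mod_cast hp.out.pos
  have h := Padic.norm_le_pow_iff_norm_lt_pow_add_one ((p : ℚ_[p]) * x) (-1)
  rw [norm_mul, Padic.norm_p, neg_add_cancel, zpow_zero, zpow_neg_one,
    mul_le_iff_le_one_right (inv_pos.2 hp0)] at h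
  rw [Set.mem_preimage, mem_ball_zero_iff, mem_closedBall_zero_iff, norm_mul, Padic.norm_p, h]

theorem setIntegral_kobaNielsen_ball :
    ∫ x in padicBox (Metric.ball 0 1) A, kobaNielsen α 0 s A (padicCoord x) ∂(padicPi p A) =
      (p : ℂ) ^ (-homogeneityDegree α s A) *
        ∫ x in padicBox (Metric.closedBall 0 1) A, kobaNielsen α 0 s A (padicCoord x)
          ∂(padicPi p A) := by
  have hp0 : (p : ℚ_[p]) ≠ 0 := by exact_mod_cast hp.out.ne_zero
  rw [setIntegral_kobaNielsen_preimage_mul hp0 Metric.isOpen_ball.measurableSet,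
    preimage_mul_prime_ball, Padic.norm_p, Complex.ofReal_inv,
    Complex.inv_cpow_ofReal_nonneg p.cast_nonneg, Complex.cpow_neg, Complex.ofReal_natCast]

theorem setIntegral_kobaNielsen_compl_closedBall (hs : ∀ i j, s i j = s j i) :
    ∫ x in padicBox (Metric.closedBall 0 1)ᶜ A, kobaNielsen γ 0 s A (padicCoord x)
        ∂(padicPi p A) =
      (p : ℂ) ^ (-homogeneityDegree (exponentAtInfinity γ s A) s A) *
        ∫ x in padicBox (Metric.closedBall 0 1) A,
          kobaNielsen (exponentAtInfinity γ s A) 0 s A (padicCoord x) ∂(padicPi p A) := by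
  rw [setIntegral_padicPi_coordinatewise (φ := MeasurableEquiv.inv ℚ_[p])
    (measurableSet_padicBox Metric.isClosed_closedBall.measurableSet.compl)
    measurePreserving_inv_padicMulHaar (prod_nnnorm_smul_kobaNielsen_inv hs), preimage_inv_padicBox,
    setIntegral_congr_set (padicBox_diff_singleton_ae_eq _ _), setIntegral_kobaNielsen_ball]

end Infinity

section Decomposition

variable {p : ℕ} [hp : Fact p.Prime] {α β γ : ℕ → ℂ} {s : ℕ → ℕ → ℂ} {A I : Finset ℕ}

theorem exponentAtInfinity_sdiff (hI : I ⊆ A) {i : ℕ} (hi : i ∈ A \ I) :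
    exponentAtInfinity (fun j => γ j + ∑ k ∈ I, s j k) s (A \ I) i =
      exponentAtInfinity γ s A i := by
  have h := exponentAtInfinity_of_subset (γ := γ) (s := s) sdiff_subset hi
  rwa [Finset.sdiff_sdiff_eq_self hI] at h

theorem kobaNielsenIntegrable_outer (hs : ∀ i j, s i j = s j i) (hI : I ⊆ A)
    (h : KobaNielsenIntegrable (exponentAtInfinity γ s A) 0 s (A \ I)
      (Metric.closedBall (0 : ℚ_[p]) 1)) :
    KobaNielsenIntegrable (fun j => γ j + ∑ i ∈ I, s j i) 0 s (A \ I)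
      (Metric.closedBall (0 : ℚ_[p]) 1)ᶜ :=
  kobaNielsenIntegrable_compl_closedBall hs
    ((kobaNielsenIntegrable_congr Metric.isClosed_closedBall.measurableSet fun _ _ =>
      kobaNielsen_congr_left fun _ hi => exponentAtInfinity_sdiff hI hi).2 h)

theorem setIntegral_kobaNielsen_outer (hs : ∀ i j, s i j = s j i) (hI : I ⊆ A) :
    ∫ x in padicBox (Metric.closedBall 0 1)ᶜ (A \ I),
        kobaNielsen (fun j => γ j + ∑ i ∈ I, s j i) 0 s (A \ I) (padicCoord x)
        ∂(padicPi p ↥(A \ I)) =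
      (p : ℂ) ^ (-homogeneityDegree (exponentAtInfinity γ s A) s (A \ I)) *
        ∫ x in padicBox (Metric.closedBall 0 1) (A \ I),
          kobaNielsen (exponentAtInfinity γ s A) 0 s (A \ I) (padicCoord x)
          ∂(padicPi p ↥(A \ I)) := by
  have hexp : ∀ i ∈ A \ I, exponentAtInfinity (fun j => γ j + ∑ k ∈ I, s j k) s (A \ I) i =
      exponentAtInfinity γ s A i := fun i hi => exponentAtInfinity_sdiff hI hi
  rw [setIntegral_kobaNielsen_compl_closedBall hs, homogeneityDegree, sum_congr rfl hexp,
    homogeneityDegree]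
  simp only [kobaNielsen_congr_left hexp]

theorem kobaNielsen_of_mem_padicCell (hs : ∀ i j, s i j = s j i) (hI : I ⊆ A) {x : A → ℚ_[p]}
    (hx : x ∈ padicCell (Metric.closedBall 0 1) (Metric.closedBall 0 1)ᶜ I A) :
    kobaNielsen α β s A (padicCoord x) =
      kobaNielsen α β s I (padicCoord (padicSplit I (A \ I) x).1) *
        kobaNielsen (fun j => (α + β) j + ∑ i ∈ I, s j i) 0 s (A \ I)
          (padicCoord (padicSplit I (A \ I) x).2) := by
  simp only [mem_padicCell, Set.mem_compl_iff, mem_closedBall_zero_iff, not_le] at hx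
  obtain ⟨hxI, hxJ⟩ := hx
  have hexp : (fun j => (α + β) j + ∑ i ∈ I, s j i) = fun j => α j + ∑ i ∈ I, s j i + β j :=
    funext fun j => add_right_comm _ _ _
  rw [hexp, kobaNielsen_congr fun i hi => padicCoord_padicSplit_fst x hi,
    kobaNielsen_congr fun i hi => padicCoord_padicSplit_snd x hi,
    ← kobaNielsen_of_one_lt_norm hxJ, ← kobaNielsen_union_of_norm_lt hs disjoint_sdiff
      (fun j hj => norm_pos_iff.1 (one_pos.trans (hxJ j hj)))
      (fun i hi j hj => (hxI i hi).trans_lt (hxJ j hj)), union_sdiff_of_subset hI]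

theorem integrableOn_kobaNielsen_padicCell (hs : ∀ i j, s i j = s j i) (hI : I ⊆ A)
    (hinner : KobaNielsenIntegrable α β s I (Metric.closedBall (0 : ℚ_[p]) 1))
    (houter : KobaNielsenIntegrable (exponentAtInfinity (α + β) s A) 0 s (A \ I)
      (Metric.closedBall (0 : ℚ_[p]) 1)) :
    IntegrableOn (fun x => kobaNielsen α β s A (padicCoord x))
      (padicCell (Metric.closedBall 0 1) (Metric.closedBall 0 1)ᶜ I A) (padicPi p A) :=
  integrableOn_padicCell hI Metric.isClosed_closedBall.measurableSet
    Metric.isClosed_closedBall.measurableSet.compl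
    (fun _ => kobaNielsen_of_mem_padicCell hs hI) hinner (kobaNielsenIntegrable_outer hs hI houter)

theorem setIntegral_kobaNielsen_padicCell (hs : ∀ i j, s i j = s j i) (hI : I ⊆ A) :
    ∫ x in padicCell (Metric.closedBall 0 1) (Metric.closedBall 0 1)ᶜ I A,
        kobaNielsen α β s A (padicCoord x) ∂(padicPi p A) =
      (p : ℂ) ^ (-homogeneityDegree (exponentAtInfinity (α + β) s A) s (A \ I)) *
        ((∫ x in padicBox (Metric.closedBall 0 1) I, kobaNielsen α β s I (padicCoord x)
          ∂(padicPi p I)) *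
          ∫ x in padicBox (Metric.closedBall 0 1) (A \ I),
            kobaNielsen (exponentAtInfinity (α + β) s A) 0 s (A \ I) (padicCoord x)
            ∂(padicPi p ↥(A \ I))) := by
  rw [mul_left_comm, ← setIntegral_kobaNielsen_outer hs hI]
  exact setIntegral_padicCell hI Metric.isClosed_closedBall.measurableSet
    Metric.isClosed_closedBall.measurableSet.compl fun _ => kobaNielsen_of_mem_padicCell hs hI

theorem integral_eq_sum_padicCell {S : Set ℚ_[p]} (hS : MeasurableSet S) {F : (A → ℚ_[p]) → ℂ}
    (hF : ∀ I ∈ A.powerset, IntegrableOn F (padicCell S Sᶜ I A) (padicPi p A)) :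
    ∫ x, F x ∂(padicPi p A) = ∑ I ∈ A.powerset, ∫ x in padicCell S Sᶜ I A, F x ∂(padicPi p A) := by
  have huniv : ⋃ I ∈ A.powerset, padicCell S Sᶜ I A = Set.univ := by
    rw [← padicBox_union_eq_biUnion, Set.union_compl_self, padicBox, Set.pi_univ]
  rw [← setIntegral_univ, ← huniv]
  exact integral_biUnion_finset _
    (fun I hI => measurableSet_padicCell (mem_powerset.1 hI) hS hS.compl)
    (pairwiseDisjoint_padicCell disjoint_compl_right) hF

theorem zeta_decomposition_general (hs : ∀ i j, s i j = s j i)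
    (hpair : ∀ J ⊆ A, 2 ≤ J.card → 1 < (homogeneityDegree 0 s J).re)
    (h0 : ∀ J ⊆ A, J.Nonempty → 0 < (homogeneityDegree α s J).re)
    (h1 : ∀ J ⊆ A, J.Nonempty → 0 < (homogeneityDegree β s J).re)
    (hinf : ∀ J ⊆ A, J.Nonempty →
      0 < (homogeneityDegree (exponentAtInfinity (α + β) s A) s J).re) :
    (∀ I ∈ A.powerset,
      KobaNielsenIntegrable α β s I (Metric.closedBall (0 : ℚ_[p]) 1) ∧
      KobaNielsenIntegrable (exponentAtInfinity (α + β) s A) 0 s (A \ I)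
        (Metric.closedBall (0 : ℚ_[p]) 1)) ∧
    ∫ x, kobaNielsen α β s A (padicCoord x) ∂(padicPi p A) =
      ∑ I ∈ A.powerset,
        (p : ℂ) ^ (-homogeneityDegree (exponentAtInfinity (α + β) s A) s (A \ I)) *
          ((∫ x in padicBox (Metric.closedBall 0 1) I, kobaNielsen α β s I (padicCoord x)
            ∂(padicPi p I)) *
            ∫ x in padicBox (Metric.closedBall 0 1) (A \ I),
              kobaNielsen (exponentAtInfinity (α + β) s A) 0 s (A \ I) (padicCoord x)
              ∂(padicPi p ↥(A \ I))) := by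
  have hinner {I : Finset ℕ} (hI : I ⊆ A) :
      KobaNielsenIntegrable α β s I (Metric.closedBall (0 : ℚ_[p]) 1) :=
    kobaNielsenIntegrable_closedBall hs (fun J hJ => hpair J (hJ.trans hI))
      (fun J hJ => h0 J (hJ.trans hI)) fun J hJ => h1 J (hJ.trans hI)
  have houter (I : Finset ℕ) : KobaNielsenIntegrable (exponentAtInfinity (α + β) s A) 0 s (A \ I)
      (Metric.closedBall (0 : ℚ_[p]) 1) :=
    kobaNielsenIntegrable_zero_right hs (fun J hJ => hpair J (hJ.trans sdiff_subset))
      fun J hJ => hinf J (hJ.trans sdiff_subset)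
  refine ⟨fun I hI => ⟨hinner (mem_powerset.1 hI), houter I⟩, ?_⟩
  rw [integral_eq_sum_padicCell Metric.isClosed_closedBall.measurableSet fun I hI =>
    integrableOn_kobaNielsen_padicCell hs (mem_powerset.1 hI) (hinner (mem_powerset.1 hI))
      (houter I)]
  exact sum_congr rfl fun I hI => setIntegral_kobaNielsen_padicCell hs (mem_powerset.1 hI)

end Decomposition

section Translation

variable {p N : ℕ} [hp : Fact p.Prime] {s : ℕ → ℕ → ℂ} {A I J : Finset ℕ}

theorem ZNset_ae_eq_univ : ZNset p N =ᵐ[padicPi p (Tset N)] Set.univ :=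
  Filter.eventuallyEq_univ.2 (ae_forall_padicCoord_ne (Tset N))

theorem Z0set_ae_eq : Z0set p A =ᵐ[padicPi p A] padicBox (Metric.closedBall 0 1) A := by
  filter_upwards [ae_forall_padicCoord_ne A] with x hx
  exact propext ⟨fun h i _ => by simpa using (h.1 i).1,
    fun h => ⟨fun i => ⟨by simpa using h i trivial, hx.1 i⟩, hx.2⟩⟩

theorem Z1set_ae_eq : Z1set p A =ᵐ[padicPi p A] padicBox (Metric.closedBall 0 1) A := by
  filter_upwards [ae_forall_padicCoord_ne A] with x hx
  exact propext ⟨fun h i _ => by simpa using (h.1 i).1,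
    fun h => ⟨fun i => ⟨by simpa using h i trivial, (hx.1 i).1⟩, hx.2⟩⟩

theorem ZNintegrand_eq_kobaNielsen :
    ZNintegrand p N s = fun x => kobaNielsen (s 1) (s (N - 1)) s (Tset N) (padicCoord x) :=
  rfl

theorem Z0integrand_eq_kobaNielsen :
    Z0integrand p N s A = fun x => kobaNielsen (s 1) (s (N - 1)) s A (padicCoord x) :=
  rfl

theorem Z1integrand_eq_kobaNielsen :
    Z1integrand p N s A = fun x =>
      kobaNielsen (exponentAtInfinity (s 1 + s (N - 1)) s (Tset N)) 0 s A (padicCoord x) := by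
  ext x
  simp only [Z1integrand, kobaNielsen_zero_right, exponentAtInfinity, Pi.add_apply, ← add_assoc]
  exact mul_comm _ _

theorem Mexp_eq_neg_homogeneityDegree (hs : ∀ i j, s i j = s j i) :
    Mexp N s I =
      -homogeneityDegree (exponentAtInfinity (s 1 + s (N - 1)) s (Tset N)) s (Tset N \ I) := by
  have hcross : (pairsIn (Tset N)).filter (fun q => q.1 ∈ I ∧ q.2 ∈ Tset N \ I) =
      (pairsIn (Tset N)).filter (fun q => q.1 ∉ Tset N \ I ∧ q.2 ∈ Tset N \ I) :=
    filter_congr fun q hq => by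
      have := (mem_pairsIn.1 hq).1.1
      simp [this]
  rw [Mexp, hcross, homogeneityDegree_exponentAtInfinity hs sdiff_subset, neg_neg]
  rfl

theorem homogeneityDegree_re {α : ℕ → ℂ} :
    (homogeneityDegree α s J).re =
      J.card + ∑ i ∈ J, (α i).re + ∑ q ∈ pairsIn J, (s q.1 q.2).re := by
  simp [homogeneityDegree, Complex.re_sum]

theorem H0C.one_lt_re_homogeneityDegree_zero (h : H0C N s) :
    ∀ J ⊆ Tset N, 2 ≤ J.card → 1 < (homogeneityDegree 0 s J).re := fun J hJ hcard => by
  have := h.2.1 J hJ hcard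
  rw [homogeneityDegree_re]
  simp only [Pi.zero_apply, Complex.zero_re, sum_const_zero]
  linarith

theorem H0C.re_homogeneityDegree_pos (h : H0C N s) {t : ℕ} (ht : t ∈ ({1, N - 1} : Finset ℕ)) :
    ∀ J ⊆ Tset N, J.Nonempty → 0 < (homogeneityDegree (s t) s J).re := fun J hJ hne => by
  rw [homogeneityDegree_re]
  exact h.2.2.1 t ht J hJ J subset_rfl (.inr hne.card_pos)

theorem H0C.re_homogeneityDegree_exponentAtInfinity_pos (h : H0C N s)
    (hs : ∀ i j, s i j = s j i) :
    ∀ J ⊆ Tset N, J.Nonempty →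
      0 < (homogeneityDegree (exponentAtInfinity (s 1 + s (N - 1)) s (Tset N)) s J).re :=
  fun J hJ hne => by
    have := h.1 J hJ hne
    rw [homogeneityDegree_exponentAtInfinity hs hJ, Complex.neg_re, neg_pos]
    simpa [Complex.re_sum] using this

end Translation

/-- For `s ∈ H₀(ℂ)` all the integrals `Z₀(s;I)`, `Z₁(s;T∖I)` converge absolutely, and
`Z^{(N)}(s) = Σ_{I ⊆ T} p^{M_I(s)} Z₀(s;I) Z₁(s;T∖I)`. -/
theorem zeta_decomposition (p : ℕ) [Fact p.Prime] (N : ℕ) (hN : 4 ≤ N)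
    (s : ℕ → ℕ → ℂ) (hsym : ∀ i j, s i j = s j i) (hs : H0C N s) :
    (∀ I ∈ (Tset N).powerset,
      IntegrableOn (Z0integrand p N s I) (Z0set p I) (padicPi p ↥I) ∧
      IntegrableOn (Z1integrand p N s (Tset N \ I)) (Z1set p (Tset N \ I))
        (padicPi p ↥(Tset N \ I))) ∧
    (∫ x in ZNset p N, ZNintegrand p N s x ∂(padicPi p ↥(Tset N))) =
      ∑ I ∈ (Tset N).powerset, (p : ℂ) ^ Mexp N s I *
        ((∫ x in Z0set p I, Z0integrand p N s I x ∂(padicPi p ↥I)) *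
          ∫ x in Z1set p (Tset N \ I), Z1integrand p N s (Tset N \ I) x
            ∂(padicPi p ↥(Tset N \ I))) := by
  simp only [Z0integrand_eq_kobaNielsen, Z1integrand_eq_kobaNielsen, ZNintegrand_eq_kobaNielsen,
    integrableOn_congr_set_ae Z0set_ae_eq, integrableOn_congr_set_ae Z1set_ae_eq,
    setIntegral_congr_set Z0set_ae_eq, setIntegral_congr_set Z1set_ae_eq,
    setIntegral_congr_set ZNset_ae_eq_univ, setIntegral_univ, Mexp_eq_neg_homogeneityDegree hsym]
  exact zeta_decomposition_general hsym hs.one_lt_re_homogeneityDegree_zero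
    (hs.re_homogeneityDegree_pos (by simp)) (hs.re_homogeneityDegree_pos (by simp))
    (hs.re_homogeneityDegree_exponentAtInfinity_pos hsym)
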